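/- arXiv:2506.22428 — 3 statements merged into one kernel-verified Lean document; each statement's English description precedes it below -/
import Mathlib

section
/- For an IPPA sequence on a proper, convex, lower semicontinuous function h with errors and step sizes satisfying (A1)–(A5), if there exists λ̄ ∈ Y with s̄ ∈ ∂h(λ̄) (equivalently, h* is subdifferentiable at s̄), then the conjugate values along the exact proximal subgradients converge at rate |h*(s⋆^k) − h*(s̄)| = O(1/√(∑_{i=0}^{k−1} γ_i)), where s̄ is the element of minimal norm in cl(range ∂h). -/
open scoped RealInnerProductSpace
open Filter Asymptotics

noncomputable section

/-- The Fenchel conjugate of an `EReal`-valued function on a real inner product space. -/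
def fenchel {Y : Type*} [NormedAddCommGroup Y] [InnerProductSpace ℝ Y]
    (h : Y → EReal) (s : Y) : EReal :=
  ⨆ l : Y, ((⟪s, l⟫ : ℝ) : EReal) - h l

/-- The convex subdifferential of an `EReal`-valued function: `v ∈ ∂h(u)` iff
`h w ≥ h u + ⟪v, w − u⟫` for all `w`. -/
def subdiff {Y : Type*} [NormedAddCommGroup Y] [InnerProductSpace ℝ Y]
    (h : Y → EReal) (u : Y) : Set Y :=
  {v : Y | ∀ w : Y, h u + ((⟪v, w - u⟫ : ℝ) : EReal) ≤ h w}

theorem aux_ereal {Y : Type*} (h : Y → EReal)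
    (hh_bot : ∀ u : Y, h u ≠ ⊥) (u : Y) (hu : h u ≠ ⊤) : ∃ a : ℝ, h u = (a : EReal) :=
  ⟨(h u).toReal, (EReal.coe_toReal hu (hh_bot u)).symm⟩

theorem aux_sub_real {Y : Type*} [NormedAddCommGroup Y] [InnerProductSpace ℝ Y]
    (h : Y → EReal) (hh_bot : ∀ u : Y, h u ≠ ⊥) (hh_top : ∃ u : Y, h u ≠ ⊤)
    (u v : Y) (hv : v ∈ subdiff h u) :
    ∃ a : ℝ, h u = (a : EReal) ∧ ∀ (w : Y) (b : ℝ), h w = (b : EReal) → a + ⟪v, w - u⟫ ≤ b := by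
  have hu : h u ≠ ⊤ := by
    intro hu
    obtain ⟨w, hw⟩ := hh_top
    have := hv w
    rw [hu, EReal.top_add_coe, top_le_iff] at this
    exact hw this
  obtain ⟨a, ha⟩ := aux_ereal h hh_bot u hu
  refine ⟨a, ha, fun w b hb => ?_⟩
  have := hv w
  rw [ha, hb] at this
  exact_mod_cast this

theorem aux_fenchel {Y : Type*} [NormedAddCommGroup Y] [InnerProductSpace ℝ Y]
    (h : Y → EReal) (hh_bot : ∀ u : Y, h u ≠ ⊥)
    (u v : Y) (a : ℝ) (ha : h u = (a : EReal))
    (hv : ∀ (w : Y) (b : ℝ), h w = (b : EReal) → a + ⟪v, w - u⟫ ≤ b) :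
    fenchel h v = ((⟪v, u⟫ - a : ℝ) : EReal) := by
  unfold fenchel
  apply le_antisymm
  · refine iSup_le fun l => ?_
    by_cases hl : h l = ⊤
    · rw [hl]; simp
    · obtain ⟨b, hb⟩ := aux_ereal h hh_bot l hl
      have := hv l b hb
      rw [inner_sub_right] at this
      rw [hb]
      norm_cast
      linarith
  · refine le_trans ?_ (le_iSup _ u)
    rw [ha]
    norm_cast

theorem aux_small {A B : ℝ} (hAB : ∀ t : ℝ, 0 < t → t ≤ 1 → A ≤ t * B) : A ≤ 0 := by
  by_contra hA
  push Not at hA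
  have h1 := hAB 1 one_pos le_rfl
  have hB : 0 < B := by linarith
  have h2 := hAB (A / (2 * B)) (by positivity) (by rw [div_le_one (by positivity)]; linarith)
  have : A / (2 * B) * B = A / 2 := by field_simp
  linarith

theorem aux_prox_sub {Y : Type*} [NormedAddCommGroup Y] [InnerProductSpace ℝ Y]
    (h : Y → EReal) (hh_bot : ∀ u : Y, h u ≠ ⊥) (hh_top : ∃ u : Y, h u ≠ ⊤)
    (hh_cvx : ∀ u v : Y, ∀ a b : ℝ, 0 ≤ a → 0 ≤ b → a + b = 1 →
      h (a • u + b • v) ≤ (a : EReal) * h u + (b : EReal) * h v)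
    (g : ℝ) (hg : 0 < g) (x p : Y)
    (hmin : ∀ μ : Y, h p + ((‖x - p‖ ^ 2 / (2 * g) : ℝ) : EReal)
        ≤ h μ + ((‖x - μ‖ ^ 2 / (2 * g) : ℝ) : EReal)) :
    g⁻¹ • (x - p) ∈ subdiff h p := by
  have hp : h p ≠ ⊤ := by
    intro hp
    obtain ⟨w, hw⟩ := hh_top
    obtain ⟨b, hb⟩ := aux_ereal h hh_bot w hw
    have := hmin w
    rw [hp, EReal.top_add_coe, top_le_iff, hb, ← EReal.coe_add] at this
    exact EReal.coe_ne_top _ this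
  obtain ⟨a, ha⟩ := aux_ereal h hh_bot p hp
  intro w
  by_cases hw : h w = ⊤
  · rw [hw]; exact le_top
  obtain ⟨b, hb⟩ := aux_ereal h hh_bot w hw
  rw [ha, hb]
  norm_cast
  have key : a + ⟪g⁻¹ • (x - p), w - p⟫ - b ≤ 0 := by
    apply aux_small (B := ‖w - p‖ ^ 2 / (2 * g))
    intro t ht ht1
    have h1 := hmin ((1 - t) • p + t • w)
    have h2 := hh_cvx p w (1 - t) t (by linarith) ht.le (by ring)
    have h3 := h1.trans (add_le_add_left h2 _)
    rw [ha, hb] at h3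
    norm_cast at h3
    have e1 : x - ((1 - t) • p + t • w) = (x - p) - t • (w - p) := by module
    rw [e1, norm_sub_sq_real (x - p) (t • (w - p)), norm_smul, inner_smul_right, mul_pow,
      Real.norm_eq_abs, sq_abs] at h3
    rw [inner_smul_left]
    simp only [conj_trivial]
    set I := ⟪x - p, w - p⟫
    set N := ‖w - p‖ ^ 2
    set Q := ‖x - p‖ ^ 2
    have e2 : (Q - 2 * (t * I) + t ^ 2 * N) / (2 * g) = Q / (2 * g) - t * (g⁻¹ * I) + t * (t * (N / (2 * g))) := by
      field_simp
    rw [e2] at h3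
    have : t * (a + g⁻¹ * I - b) ≤ t * (t * (N / (2 * g))) := by linarith
    exact le_of_mul_le_mul_left this ht
  linarith

theorem aux_prox_exists {Y : Type*} [NormedAddCommGroup Y] [InnerProductSpace ℝ Y] [CompleteSpace Y]
    (h : Y → EReal) (hh_bot : ∀ u : Y, h u ≠ ⊥) (hh_top : ∃ u : Y, h u ≠ ⊤)
    (hh_lsc : LowerSemicontinuous h)
    (hh_cvx : ∀ u v : Y, ∀ a b : ℝ, 0 ≤ a → 0 ≤ b → a + b = 1 →
      h (a • u + b • v) ≤ (a : EReal) * h u + (b : EReal) * h v)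
    (g : ℝ) (hg : 0 < g) (x : Y) (B : ℝ)
    (hB : ∀ (μ : Y) (r : ℝ), h μ = (r : EReal) → B ≤ r + ‖x - μ‖ ^ 2 / (2 * g)) :
    ∃ p : Y, ∀ μ : Y, h p + ((‖x - p‖ ^ 2 / (2 * g) : ℝ) : EReal)
        ≤ h μ + ((‖x - μ‖ ^ 2 / (2 * g) : ℝ) : EReal) := by
  let T : Set ℝ := {z | ∃ (μ : Y) (r : ℝ), h μ = (r : EReal) ∧ z = r + ‖x - μ‖ ^ 2 / (2 * g)}
  have hTn : T.Nonempty := by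
    obtain ⟨w, hw⟩ := hh_top
    obtain ⟨b, hb⟩ := aux_ereal h hh_bot w hw
    exact ⟨_, w, b, hb, rfl⟩
  have hTb : BddBelow T := ⟨B, by rintro _ ⟨μ, r, hr, rfl⟩; exact hB μ r hr⟩
  set m := sInf T with hm
  have hmle : ∀ (μ : Y) (r : ℝ), h μ = (r : EReal) → m ≤ r + ‖x - μ‖ ^ 2 / (2 * g) :=
    fun μ r hr => csInf_le hTb ⟨μ, r, hr, rfl⟩
  have hex : ∀ j : ℕ, ∃ (μ : Y) (r : ℝ), h μ = (r : EReal) ∧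
      r + ‖x - μ‖ ^ 2 / (2 * g) < m + 1 / ((j : ℝ) + 1) := by
    intro j
    obtain ⟨_, ⟨μ, r, hr, rfl⟩, hz⟩ := exists_lt_of_csInf_lt hTn
      (show sInf T < m + 1 / ((j : ℝ) + 1) by
        have : 0 < 1 / ((j : ℝ) + 1) := by positivity
        linarith)
    exact ⟨μ, r, hr, hz⟩
  choose y r hr hy using hex
  have hdist : ∀ i j : ℕ, ‖y i - y j‖ ^ 2 ≤ 4 * g * (1 / ((i : ℝ) + 1) + 1 / ((j : ℝ) + 1)) := by
    intro i j
    have h2 := hh_cvx (y i) (y j) (1/2) (1/2) (by norm_num) (by norm_num) (by norm_num)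
    rw [hr i, hr j] at h2
    norm_cast at h2
    have hnt : h ((1/2 : ℝ) • y i + (1/2 : ℝ) • y j) ≠ ⊤ := ne_top_of_le_ne_top (EReal.coe_ne_top _) h2
    obtain ⟨b, hb⟩ := aux_ereal h hh_bot _ hnt
    have h3 := hmle _ b hb
    rw [hb] at h2
    have h2' : b ≤ 1/2 * r i + 1/2 * r j := by exact_mod_cast h2
    have e : ‖x - ((1/2 : ℝ) • y i + (1/2 : ℝ) • y j)‖ ^ 2
        = ‖x - y i‖ ^ 2 / 2 + ‖x - y j‖ ^ 2 / 2 - ‖y i - y j‖ ^ 2 / 4 := by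
      have e1 : x - ((1/2 : ℝ) • y i + (1/2 : ℝ) • y j) = (1/2 : ℝ) • ((x - y i) + (x - y j)) := by
        module
      have e2 : y i - y j = (x - y j) - (x - y i) := by abel
      rw [e1, e2, norm_smul, mul_pow, norm_add_sq_real, norm_sub_sq_real (x - y j) (x - y i),
        real_inner_comm (x - y i) (x - y j)]
      norm_num
      ring
    rw [e] at h3
    have hi := hy i
    have hj := hy j
    have e3 : (‖x - y i‖ ^ 2 / 2 + ‖x - y j‖ ^ 2 / 2 - ‖y i - y j‖ ^ 2 / 4) / (2 * g)
      = (‖x - y i‖ ^ 2 / (2 * g)) / 2 + (‖x - y j‖ ^ 2 / (2 * g)) / 2 - ‖y i - y j‖ ^ 2 / (8 * g) := by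
      field_simp
      ring
    rw [e3] at h3
    have h4 : ‖y i - y j‖ ^ 2 / (8 * g) ≤ (1 / ((i : ℝ) + 1) + 1 / ((j : ℝ) + 1)) / 2 := by linarith
    rw [div_le_iff₀ (by positivity)] at h4
    linarith
  have hcau : CauchySeq y := by
    rw [Metric.cauchySeq_iff']
    intro e he
    obtain ⟨N, hN⟩ := exists_nat_one_div_lt (show 0 < e ^ 2 / (8 * g) by positivity)
    refine ⟨N, fun n hn => ?_⟩
    rw [dist_eq_norm]
    have h1 := hdist n N
    have h2 : 1 / ((n : ℝ) + 1) ≤ 1 / ((N : ℝ) + 1) := Nat.one_div_le_one_div hn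
    have h3 : ‖y n - y N‖ ^ 2 < e ^ 2 := by
      rw [lt_div_iff₀ (by positivity)] at hN
      nlinarith
    exact lt_of_pow_lt_pow_left₀ 2 he.le h3
  obtain ⟨p, hp⟩ := cauchySeq_tendsto_of_complete hcau
  refine ⟨p, ?_⟩
  have hup : ∀ j, r j ≤ m + 1 / ((j : ℝ) + 1) - ‖x - y j‖ ^ 2 / (2 * g) := fun j => by
    linarith [hy j]
  have hlim : Tendsto (fun j : ℕ => m + 1 / ((j : ℝ) + 1) - ‖x - y j‖ ^ 2 / (2 * g)) atTop
      (nhds (m + 0 - ‖x - p‖ ^ 2 / (2 * g))) := by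
    refine (tendsto_const_nhds.add tendsto_one_div_add_atTop_nhds_zero_nat).sub ?_
    exact (((tendsto_const_nhds.sub hp).norm.pow 2).div_const _)
  have hpm : h p ≤ ((m + 0 - ‖x - p‖ ^ 2 / (2 * g) : ℝ) : EReal) := by
    apply EReal.le_of_forall_lt_iff_le.mp
    intro z hz
    have hz' : m + 0 - ‖x - p‖ ^ 2 / (2 * g) < z := by exact_mod_cast hz
    have hcl : IsClosed (h ⁻¹' Set.Iic (z : EReal)) := hh_lsc.isClosed_preimage _
    refine hcl.mem_of_tendsto hp ?_
    filter_upwards [hlim.eventually (gt_mem_nhds hz')] with j hj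
    show h (y j) ≤ z
    rw [hr j]
    exact_mod_cast (hup j).trans hj.le
  intro μ
  by_cases hμ : h μ = ⊤
  · rw [hμ, EReal.top_add_coe]; exact le_top
  obtain ⟨b, hb⟩ := aux_ereal h hh_bot μ hμ
  obtain ⟨a, ha⟩ := aux_ereal h hh_bot p (ne_top_of_le_ne_top (EReal.coe_ne_top _) hpm)
  have := hmle μ b hb
  rw [ha] at hpm
  have hpm' : a ≤ m + 0 - ‖x - p‖ ^ 2 / (2 * g) := by exact_mod_cast hpm
  rw [ha, hb]
  norm_cast
  linarith

theorem aux_closure {Y : Type*} [NormedAddCommGroup Y] [InnerProductSpace ℝ Y] [CompleteSpace Y]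
    (h : Y → EReal) (hh_bot : ∀ u : Y, h u ≠ ⊥) (hh_top : ∃ u : Y, h u ≠ ⊤)
    (hh_lsc : LowerSemicontinuous h)
    (hh_cvx : ∀ u v : Y, ∀ a b : ℝ, 0 ≤ a → 0 ≤ b → a + b = 1 →
      h (a • u + b • v) ≤ (a : EReal) * h u + (b : EReal) * h v)
    (w : Y) (C : ℝ) (hC : ∀ (μ : Y) (r : ℝ), h μ = (r : EReal) → ⟪w, μ⟫ - C ≤ r) :
    w ∈ closure {v : Y | ∃ u : Y, v ∈ subdiff h u} := by
  obtain ⟨l, hl⟩ := hh_top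
  obtain ⟨b, hb⟩ := aux_ereal h hh_bot l hl
  rw [Metric.mem_closure_iff]
  intro e he
  set K := 2 * (b - ⟪w, l⟫ + C) + ‖l‖ ^ 2 with hK
  have hK0 : 0 ≤ K := by have := hC l b hb; nlinarith [sq_nonneg ‖l‖]
  -- choose the regularization parameter
  obtain ⟨c, hc, hc1, hcK⟩ : ∃ c : ℝ, 0 < c ∧ c ≤ 1 ∧ c * K < e ^ 2 := by
    refine ⟨min 1 (e ^ 2 / (2 * (K + 1))), by positivity, min_le_left _ _, ?_⟩
    have h1 : min 1 (e ^ 2 / (2 * (K + 1))) ≤ e ^ 2 / (2 * (K + 1)) := min_le_right _ _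
    have h2 : e ^ 2 / (2 * (K + 1)) * (2 * (K + 1)) = e ^ 2 := by field_simp
    have h3 : 0 < e ^ 2 / (2 * (K + 1)) := by positivity
    nlinarith [mul_le_mul_of_nonneg_right h1 hK0]
  have hsq : ∀ μ : Y, ‖c⁻¹ • w - μ‖ ^ 2 / (2 * c⁻¹)
      = ‖w‖ ^ 2 / (2 * c) - ⟪w, μ⟫ + c / 2 * ‖μ‖ ^ 2 := by
    intro μ
    rw [norm_sub_sq_real, norm_smul, inner_smul_left, mul_pow, Real.norm_eq_abs, sq_abs]
    simp only [conj_trivial]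
    field_simp
  obtain ⟨p, hp⟩ := aux_prox_exists h hh_bot ⟨l, hl⟩ hh_lsc hh_cvx c⁻¹ (by positivity) (c⁻¹ • w)
    (‖w‖ ^ 2 / (2 * c) - C) (by
      intro μ r hr
      have h1 := hC μ r hr
      have h2 : 0 ≤ c / 2 * ‖μ‖ ^ 2 := by positivity
      rw [hsq]
      linarith)
  have hs := aux_prox_sub h hh_bot ⟨l, hl⟩ hh_cvx c⁻¹ (by positivity) _ p hp
  refine ⟨_, ⟨p, hs⟩, ?_⟩
  obtain ⟨a, ha, -⟩ := aux_sub_real h hh_bot ⟨l, hl⟩ _ _ hs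
  have h1 := hp l
  rw [ha, hb, hsq, hsq] at h1
  norm_cast at h1
  have h2 := hC p a ha
  have e1 : w - c⁻¹⁻¹ • (c⁻¹ • w - p) = c • p := by
    rw [inv_inv, smul_sub, smul_smul, mul_inv_cancel₀ hc.ne', one_smul]; abel
  rw [dist_eq_norm, e1, norm_smul, Real.norm_eq_abs, abs_of_pos hc]
  apply lt_of_pow_lt_pow_left₀ 2 he.le
  have h3 : c * ‖p‖ ^ 2 ≤ K := by
    have : c * ‖l‖ ^ 2 ≤ ‖l‖ ^ 2 := mul_le_of_le_one_left (by positivity) hc1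
    linarith
  calc (c * ‖p‖) ^ 2 = c * (c * ‖p‖ ^ 2) := by ring
    _ ≤ c * K := by gcongr
    _ < e ^ 2 := hcK

theorem aux_var {Y : Type*} [NormedAddCommGroup Y] [InnerProductSpace ℝ Y] [CompleteSpace Y]
    (h : Y → EReal) (hh_bot : ∀ u : Y, h u ≠ ⊥) (hh_top : ∃ u : Y, h u ≠ ⊤)
    (hh_lsc : LowerSemicontinuous h)
    (hh_cvx : ∀ u v : Y, ∀ a b : ℝ, 0 ≤ a → 0 ≤ b → a + b = 1 →
      h (a • u + b • v) ≤ (a : EReal) * h u + (b : EReal) * h v)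
    (sbar lb : Y) (hlb : sbar ∈ subdiff h lb)
    (hsbar_min : ∀ v ∈ closure {v : Y | ∃ u : Y, v ∈ subdiff h u}, ‖sbar‖ ≤ ‖v‖)
    (u v : Y) (hv : v ∈ subdiff h u) : 0 ≤ ⟪v - sbar, sbar⟫ := by
  obtain ⟨a, ha, hva⟩ := aux_sub_real h hh_bot hh_top _ _ hv
  obtain ⟨b, hb, hvb⟩ := aux_sub_real h hh_bot hh_top _ _ hlb
  have key : -(2 * ⟪v - sbar, sbar⟫) ≤ 0 := by
    apply aux_small (B := ‖v - sbar‖ ^ 2)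
    intro t ht ht1
    have hm := hsbar_min (sbar + t • (v - sbar)) (by
      apply aux_closure h hh_bot hh_top hh_lsc hh_cvx _
        ((1 - t) * (⟪sbar, lb⟫ - b) + t * (⟪v, u⟫ - a))
      intro μ r hr
      have h1 := hva μ r hr
      have h2 := hvb μ r hr
      rw [inner_sub_right] at h1 h2
      rw [inner_add_left, inner_smul_left, inner_sub_left]
      simp only [conj_trivial]
      nlinarith [mul_le_mul_of_nonneg_left h1 ht.le,
        mul_le_mul_of_nonneg_left h2 (show 0 ≤ 1 - t by linarith)])
    have hm2 : ‖sbar‖ ^ 2 ≤ ‖sbar + t • (v - sbar)‖ ^ 2 := by gcongr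
    rw [norm_add_sq_real, norm_smul, inner_smul_right, mul_pow, Real.norm_eq_abs, sq_abs,
      real_inner_comm] at hm2
    have : t * (-(2 * ⟪v - sbar, sbar⟫)) ≤ t * (t * ‖v - sbar‖ ^ 2) := by linarith
    exact le_of_mul_le_mul_left this ht
  linarith

theorem aux_rate {Y : Type*} [NormedAddCommGroup Y] [InnerProductSpace ℝ Y]
    (γ ε : ℕ → ℝ) (hγ : ∀ k : ℕ, 0 < γ k) (hε : ∀ k : ℕ, 0 ≤ ε k)
    (lam L S : ℕ → Y) (F : ℕ → ℝ) (sb lb : Y) (hb : ℝ)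
    (hFF : ∀ k j, F k + ⟪S k, L j - L k⟫ ≤ F j)
    (hFb : ∀ k, F k + ⟪S k, lb - L k⟫ ≤ hb)
    (hbF : ∀ k, hb + ⟪sb, L k - lb⟫ ≤ F k)
    (hvar : ∀ k, 0 ≤ ⟪S k - sb, sb⟫)
    (hL : ∀ k, lam k = L k + γ k • S k)
    (herr : ∀ k : ℕ, ‖lam (k+1) - L k‖ ≤ ε (k+1))
    (A1 : Summable ε)
    (A3 : Summable fun k : ℕ => (ε (k+1) / γ (k+1)) ^ 2 * ∑ i ∈ Finset.range (k+1), γ i)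
    (A4 : Summable fun k : ℕ => ε (k+1) / γ (k+1) * ∑ i ∈ Finset.range (k+1), γ i) :
    ∃ R C : ℝ, ∀ k, ‖L k + (∑ i ∈ Finset.range (k+1), γ i) • sb - lb‖ ≤ R ∧
      (∑ i ∈ Finset.range (k+1), γ i) * ‖S k - sb‖ ^ 2 ≤ C := by
  set σ : ℕ → ℝ := fun n => ∑ i ∈ Finset.range n, γ i with hσ
  have hσs : ∀ k, σ (k+1) = σ k + γ k := fun k => Finset.sum_range_succ _ _
  have hσ0 : ∀ k, 0 ≤ σ k := fun k => Finset.sum_nonneg fun i _ => (hγ i).le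
  have hσ1 : ∀ k, γ 0 ≤ σ (k+1) := fun k =>
    Finset.single_le_sum (f := γ) (fun i _ => (hγ i).le) (by simp)
  -- the Fejer-type inequality
  have fej : ∀ k, ‖L k + σ (k+1) • sb - lb‖ ^ 2 + (γ k * ‖S k - sb‖) ^ 2
      ≤ ‖lam k + σ k • sb - lb‖ ^ 2 := by
    intro k
    have e1 : lam k + σ k • sb - lb = (L k + σ (k+1) • sb - lb) + γ k • (S k - sb) := by
      rw [hL k, hσs k]; module
    have e2 : ⟪L k + σ (k+1) • sb - lb, S k - sb⟫
        = ⟪S k - sb, L k - lb⟫ + σ (k+1) * ⟪S k - sb, sb⟫ := by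
      rw [real_inner_comm, ← inner_smul_right, ← inner_add_right]
      congr 1; abel
    have e3 : 0 ≤ ⟪S k - sb, L k - lb⟫ := by
      have h1 := hFb k
      have h2 := hbF k
      rw [← neg_sub (L k) lb, inner_neg_right] at h1
      rw [inner_sub_left]; linarith
    have e4 : 0 ≤ γ k * (⟪S k - sb, L k - lb⟫ + σ (k+1) * ⟪S k - sb, sb⟫) :=
      mul_nonneg (hγ k).le (add_nonneg e3 (mul_nonneg (hσ0 _) (hvar k)))
    rw [e1, norm_add_sq_real, inner_smul_right, e2, norm_smul, Real.norm_eq_abs, abs_of_pos (hγ k)]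
    linarith
  have fej1 : ∀ k, ‖L k + σ (k+1) • sb - lb‖ ≤ ‖lam k + σ k • sb - lb‖ := fun k => by
    apply le_of_sq_le_sq _ (norm_nonneg _)
    nlinarith [fej k, sq_nonneg (γ k * ‖S k - sb‖)]
  have fej2 : ∀ k, γ k * ‖S k - sb‖ ≤ ‖lam k + σ k • sb - lb‖ := fun k => by
    apply le_of_sq_le_sq _ (norm_nonneg _)
    nlinarith [fej k, sq_nonneg ‖L k + σ (k+1) • sb - lb‖]
  have hx : ∀ k, ‖lam k + σ k • sb - lb‖ ≤ ‖lam 0 + σ 0 • sb - lb‖ + ∑ i ∈ Finset.range k, ε (i+1) := by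
    intro k
    induction k with
    | zero => simp
    | succ k ih =>
      rw [Finset.sum_range_succ]
      have e1 : lam (k+1) + σ (k+1) • sb - lb
          = (L k + σ (k+1) • sb - lb) + (lam (k+1) - L k) := by abel
      have := norm_add_le (L k + σ (k+1) • sb - lb) (lam (k+1) - L k)
      rw [e1]
      linarith [fej1 k, herr k]
  obtain ⟨R, hR⟩ : ∃ R, ∀ k, ‖lam k + σ k • sb - lb‖ ≤ R := by
    refine ⟨‖lam 0 + σ 0 • sb - lb‖ + ∑' i, ε (i+1), fun k => (hx k).trans ?_⟩
    gcongr
    exact ((summable_nat_add_iff 1).mpr A1).sum_le_tsum _ (fun i _ => hε _)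
  have hR0 : 0 ≤ R := (norm_nonneg _).trans (hR 0)
  set G : ℕ → ℝ := fun k => F k - ⟪sb, L k⟫ with hG
  have hGb : ∀ k, hb - ⟪sb, lb⟫ ≤ G k := fun k => by
    have := hbF k
    rw [inner_sub_right] at this
    simp only [hG]; linarith
  set p : ℕ → ℝ := fun k => ‖S k‖ ^ 2 - ‖sb‖ ^ 2 with hp
  have hpe : ∀ k, p k = ‖S k - sb‖ ^ 2 + 2 * ⟪S k - sb, sb⟫ := fun k => by
    simp only [hp]
    rw [norm_sub_sq_real, inner_sub_left, real_inner_self_eq_norm_sq]; ring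
  have hLd : ∀ k, L k - L (k+1) = γ (k+1) • S (k+1) - (lam (k+1) - L k) := fun k => by
    have := hL (k+1)
    rw [this]; abel
  have step1 : ∀ k, γ (k+1) * p (k+1) ≤ 2 * (G k - G (k+1))
      + 2 * R / γ 0 * (ε (k+1) / γ (k+1) * σ (k+1)) := by
    intro k
    have h1 : ⟪S (k+1) - sb, L k - L (k+1)⟫ ≤ G k - G (k+1) := by
      have := hFF (k+1) k
      simp only [hG]
      rw [inner_sub_left, inner_sub_right sb]
      linarith
    have h2 : ⟪S (k+1) - sb, lam (k+1) - L k⟫ ≤ ‖S (k+1) - sb‖ * ε (k+1) :=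
      (real_inner_le_norm _ _).trans (by gcongr; exact herr k)
    have h3 : ‖S (k+1) - sb‖ * ε (k+1) ≤ R / γ 0 * (ε (k+1) / γ (k+1) * σ (k+1)) := by
      have h4 : ‖S (k+1) - sb‖ ≤ R / γ (k+1) := by
        rw [le_div_iff₀ (hγ _)]
        linarith [fej2 (k+1), hR (k+1)]
      have h5 : 1 ≤ σ (k+1) / γ 0 := by
        rw [le_div_iff₀ (hγ 0)]; linarith [hσ1 k]
      have h6 : 0 ≤ R / γ (k+1) * ε (k+1) :=
        mul_nonneg (div_nonneg hR0 (hγ _).le) (hε _)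
      calc ‖S (k+1) - sb‖ * ε (k+1) ≤ R / γ (k+1) * ε (k+1) :=
            mul_le_mul_of_nonneg_right h4 (hε _)
        _ ≤ R / γ (k+1) * ε (k+1) * (σ (k+1) / γ 0) := le_mul_of_one_le_right h6 h5
        _ = _ := by ring
    have h7 : ⟪S (k+1) - sb, S (k+1)⟫ = ‖S (k+1) - sb‖ ^ 2 + ⟪S (k+1) - sb, sb⟫ := by
      rw [← real_inner_self_eq_norm_sq, ← inner_add_right]; congr 1; abel
    rw [hLd, inner_sub_right, inner_smul_right, h7] at h1
    have h8 : 0 ≤ γ (k+1) * ‖S (k+1) - sb‖ ^ 2 := mul_nonneg (hγ _).le (sq_nonneg _)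
    rw [hpe]
    have e9 : 2 * R / γ 0 * (ε (k+1) / γ (k+1) * σ (k+1))
      = 2 * (R / γ 0 * (ε (k+1) / γ (k+1) * σ (k+1))) := by ring
    rw [e9]
    linarith
  have step2 : ∀ k, p (k+1) ≤ p k + (ε (k+1) / γ (k+1)) ^ 2 := by
    intro k
    have h1 : ⟪S (k+1) - S k, L k - L (k+1)⟫ ≤ 0 := by
      have e1 := hFF (k+1) k
      have e2 := hFF k (k+1)
      rw [← neg_sub (L k), inner_neg_right] at e2
      rw [inner_sub_left]; linarith
    have h2 : ⟪S (k+1) - S k, lam (k+1) - L k⟫ ≤ ‖S (k+1) - S k‖ * ε (k+1) :=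
      (real_inner_le_norm _ _).trans (by gcongr; exact herr k)
    rw [hLd, inner_sub_right, inner_smul_right] at h1
    have h3 : ⟪S (k+1) - S k, S (k+1)⟫ ≤ ‖S (k+1) - S k‖ * (ε (k+1) / γ (k+1)) := by
      rw [← mul_div_assoc, le_div_iff₀ (hγ _)]; linarith
    have h4 : ‖S k‖ ^ 2 = ‖S (k+1)‖ ^ 2 - 2 * ⟪S (k+1) - S k, S (k+1)⟫ + ‖S (k+1) - S k‖ ^ 2 := by
      have : S k = S (k+1) - (S (k+1) - S k) := by abel
      conv_lhs => rw [this]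
      rw [norm_sub_sq_real, real_inner_comm]
    simp only [hp]
    nlinarith [sq_nonneg (‖S (k+1) - S k‖ - ε (k+1) / γ (k+1))]
  have ind : ∀ k, σ (k+1) * p k + 2 * G k ≤ σ 1 * p 0 + 2 * G 0
      + (2 * R / γ 0 * ∑ i ∈ Finset.range k, ε (i+1) / γ (i+1) * σ (i+1)
      + ∑ i ∈ Finset.range k, (ε (i+1) / γ (i+1)) ^ 2 * σ (i+1)) := by
    intro k
    induction k with
    | zero => simp
    | succ k ih =>
      rw [Finset.sum_range_succ, Finset.sum_range_succ, mul_add, hσs (k+1)]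
      have := mul_le_mul_of_nonneg_left (step2 k) (hσ0 (k+1))
      linarith [step1 k]
  refine ⟨R, σ 1 * p 0 + 2 * G 0
      + (2 * R / γ 0 * ∑' i, ε (i+1) / γ (i+1) * σ (i+1)
      + ∑' i, (ε (i+1) / γ (i+1)) ^ 2 * σ (i+1)) - 2 * (hb - ⟪sb, lb⟫),
      fun k => ⟨(fej1 k).trans (hR k), ?_⟩⟩
  have t4 := A4.sum_le_tsum (Finset.range k)
    (fun i _ => mul_nonneg (div_nonneg (hε _) (hγ _).le) (hσ0 _))
  have t3 := A3.sum_le_tsum (Finset.range k) (fun i _ => mul_nonneg (sq_nonneg _) (hσ0 _))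
  have t4' := mul_le_mul_of_nonneg_left t4
    (show 0 ≤ 2 * R / γ 0 from div_nonneg (by linarith) (hγ 0).le)
  have hle : ‖S k - sb‖ ^ 2 ≤ p k := by rw [hpe]; linarith [hvar k]
  have := mul_le_mul_of_nonneg_left hle (hσ0 (k+1))
  have := ind k
  have := hGb k
  linarith

theorem statement10
    {Y : Type*}
    [NormedAddCommGroup Y] [InnerProductSpace ℝ Y] [CompleteSpace Y]
    (h : Y → EReal)
    (hh_bot : ∀ u : Y, h u ≠ ⊥) (hh_top : ∃ u : Y, h u ≠ ⊤)
    (hh_lsc : LowerSemicontinuous h)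
    (hh_cvx : ∀ u v : Y, ∀ a b : ℝ, 0 ≤ a → 0 ≤ b → a + b = 1 →
      h (a • u + b • v) ≤ (a : EReal) * h u + (b : EReal) * h v)
    (γ : ℕ → ℝ) (hγ : ∀ k : ℕ, 0 < γ k) (ε : ℕ → ℝ) (hε : ∀ k : ℕ, 0 ≤ ε k)
    (lam lamstar sstar ss : ℕ → Y)
    (hmin : ∀ (k : ℕ) (μ : Y),
      h (lamstar (k+1)) + ((‖lam k - lamstar (k+1)‖ ^ 2 / (2 * γ k) : ℝ) : EReal)
        ≤ h μ + ((‖lam k - μ‖ ^ 2 / (2 * γ k) : ℝ) : EReal))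
    (hsstar : ∀ k : ℕ, sstar (k+1) = (γ k)⁻¹ • (lam k - lamstar (k+1)))
    (herr : ∀ k : ℕ, ‖lam (k+1) - lamstar (k+1)‖ ≤ ε (k+1))
    (hss : ∀ k : ℕ, ss (k+1) = (γ k)⁻¹ • (lam k - lam (k+1)))
    (A1 : Summable ε)
    (A2 : (fun k : ℕ => ε (k+1) / γ k * ∑ i ∈ Finset.range (k+1), γ i)
        =O[atTop] fun k : ℕ => 1 / Real.sqrt (∑ i ∈ Finset.range (k+1), γ i))
    (A3 : Summable fun k : ℕ => (ε (k+1) / γ (k+1)) ^ 2 * ∑ i ∈ Finset.range (k+1), γ i)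
    (A4 : Summable fun k : ℕ => ε (k+1) / γ (k+1) * ∑ i ∈ Finset.range (k+1), γ i)
    (A5 : Tendsto (fun n : ℕ => ∑ i ∈ Finset.range n, γ i) atTop atTop)
    (sbar : Y)
    (hsbar_mem : sbar ∈ closure {v : Y | ∃ u : Y, v ∈ subdiff h u})
    (hsbar_min : ∀ v ∈ closure {v : Y | ∃ u : Y, v ∈ subdiff h u}, ‖sbar‖ ≤ ‖v‖)
    (hsub : ∃ lb : Y, sbar ∈ subdiff h lb) :
    ∃ M : ℝ, ∀ᶠ k in atTop,
      fenchel h (sstar k) ≤ fenchel h sbar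
          + ((M / Real.sqrt (∑ i ∈ Finset.range k, γ i) : ℝ) : EReal) ∧
      fenchel h sbar ≤ fenchel h (sstar k)
          + ((M / Real.sqrt (∑ i ∈ Finset.range k, γ i) : ℝ) : EReal) := by
  obtain ⟨lb, hlb⟩ := hsub
  have hS : ∀ k, sstar (k+1) ∈ subdiff h (lamstar (k+1)) := fun k => by
    rw [hsstar k]
    exact aux_prox_sub h hh_bot hh_top hh_cvx (γ k) (hγ k) _ _ (hmin k)
  have hSr := fun k => aux_sub_real h hh_bot hh_top _ _ (hS k)
  choose F hF hFs using hSr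
  obtain ⟨b, hb, hbs⟩ := aux_sub_real h hh_bot hh_top _ _ hlb
  obtain ⟨R, C, hRC⟩ := aux_rate γ ε hγ hε lam (fun k => lamstar (k+1)) (fun k => sstar (k+1)) F
    sbar lb b (fun k j => hFs k _ _ (hF j)) (fun k => hFs k _ _ hb) (fun k => hbs _ _ (hF k))
    (fun k => aux_var h hh_bot hh_top hh_lsc hh_cvx sbar lb hlb hsbar_min _ _ (hS k))
    (fun k => by
      rw [hsstar k, smul_smul, mul_inv_cancel₀ (hγ k).ne', one_smul]; abel)
    herr A1 A3 A4
  have hR0 : 0 ≤ R := (norm_nonneg _).trans (hRC 0).1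
  refine ⟨Real.sqrt C * (R + ‖lb‖), ?_⟩
  filter_upwards [eventually_ge_atTop 1] with k hk
  obtain ⟨n, rfl⟩ : ∃ n, k = n + 1 := ⟨k - 1, by omega⟩
  obtain ⟨h1, h2⟩ := hRC n
  have hv := aux_var h hh_bot hh_top hh_lsc hh_cvx sbar lb hlb hsbar_min _ _ (hS n)
  rw [aux_fenchel h hh_bot _ _ _ (hF n) (hFs n), aux_fenchel h hh_bot _ _ _ hb hbs]
  have hσ : 0 < ∑ i ∈ Finset.range (n+1), γ i :=
    Finset.sum_pos (fun i _ => hγ i) (by simp)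
  set σ := ∑ i ∈ Finset.range (n+1), γ i
  set s := sstar (n+1)
  set l := lamstar (n+1)
  have h3 : ‖s - sbar‖ ≤ Real.sqrt C / Real.sqrt σ := by
    rw [le_div_iff₀ (Real.sqrt_pos.mpr hσ)]
    apply Real.le_sqrt_of_sq_le
    rw [mul_pow, Real.sq_sqrt hσ.le]
    linarith
  have h4 : Real.sqrt C * (R + ‖lb‖) / Real.sqrt σ = Real.sqrt C / Real.sqrt σ * (R + ‖lb‖) := by
    ring
  have hq : 0 ≤ Real.sqrt C / Real.sqrt σ := by positivity
  have f1 := hFs n lb b hb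
  have f2 := hbs l (F n) (hF n)
  rw [inner_sub_right] at f1 f2
  rw [h4]
  norm_cast
  constructor
  · have e1 : ⟪s - sbar, l⟫ ≤ ⟪s - sbar, l + σ • sbar⟫ := by
      rw [inner_add_right, inner_smul_right]
      have := mul_nonneg hσ.le hv
      linarith
    have e2 : ‖l + σ • sbar‖ ≤ R + ‖lb‖ := by
      have := norm_add_le (l + σ • sbar - lb) lb
      rw [sub_add_cancel] at this
      linarith
    have e3 := (real_inner_le_norm (s - sbar) (l + σ • sbar)).trans
      (mul_le_mul h3 e2 (norm_nonneg _) hq)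
    rw [inner_sub_left] at e1
    linarith
  · have e3 := (real_inner_le_norm (sbar - s) lb).trans
      (mul_le_mul (by rw [norm_sub_rev]; exact h3) (show ‖lb‖ ≤ R + ‖lb‖ by linarith)
        (norm_nonneg _) hq)
    rw [inner_sub_left] at e3
    linarith
end
end

section
/- For an IALM sequence with errors and penalty parameters satisfying (A1)–(A5): the algorithm simply converges to the closest feasible problem (i.e. f(x^k) → ν(s̄), C(x^k) − y^k → s̄, and ‖y^k − Proj_K(C(x^k))‖ → 0) if and only if the value function ν is lower semicontinuous at s̄ and ν(s̄) is finite. If moreover ν(s̄) < ∞, then the algorithm semi-quantitatively converges: in addition, ‖C(x^k) − y^k − s̄‖ = O(1/√(∑_{i=0}^{k−1} γ_i)) and ‖y^k − Proj_K(C(x^k))‖ = O(1/√(∑_{i=0}^{k−1} γ_i)). -/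
open scoped RealInnerProductSpace
open Filter Asymptotics

noncomputable section

/-- The negative dual function `h(l) = sup_{(x,s) ∈ 𝒞} (⟪l, s⟫ − f x)`. -/
def negDual {E Y : Type*} [NormedAddCommGroup Y] [InnerProductSpace ℝ Y]
    (f : E → EReal) (CC : Set (E × Y)) (l : Y) : EReal :=
  ⨆ (p : E × Y) (_ : p ∈ CC), ((⟪l, p.2⟫ : ℝ) : EReal) - f p.1

/-- The value function of the shifted problem: `ν(s̃) = inf { f x | (x, s̃) ∈ 𝒞 }`. -/
def valueFn {E Y : Type*} (f : E → EReal) (CC : Set (E × Y)) (st : Y) : EReal :=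
  ⨅ (x : E) (_ : (x, st) ∈ CC), f x

/-- Existence of an exact minimizer of the augmented Lagrangian over a closed convex set. -/
lemma exists_exact {Y : Type*} [NormedAddCommGroup Y] [InnerProductSpace ℝ Y] [CompleteSpace Y]
    (D : Set (Y × ℝ)) (hD : IsClosed D) (hDc : Convex ℝ D) (hDn : D.Nonempty)
    (l : Y) (g : ℝ) (hg : 0 < g) (m0 : ℝ)
    (hm0 : ∀ p ∈ D, m0 ≤ p.2 - ⟪l, p.1⟫ + g / 2 * ‖p.1‖ ^ 2) :
    ∃ q ∈ D, ∀ p ∈ D, q.2 - ⟪l - g • q.1, q.1⟫ ≤ p.2 - ⟪l - g • q.1, p.1⟫ := by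
  set φ : Y × ℝ → ℝ := fun p => p.2 - ⟪l, p.1⟫ + g / 2 * ‖p.1‖ ^ 2 with hφ
  have hφc : Continuous φ := by fun_prop
  set m := sInf (φ '' D) with hm
  have hbdd : BddBelow (φ '' D) := ⟨m0, by rintro _ ⟨p, hp, rfl⟩; exact hm0 p hp⟩
  have hml : ∀ p ∈ D, m ≤ φ p := fun p hp => csInf_le hbdd ⟨p, hp, rfl⟩
  have hex : ∀ n : ℕ, ∃ p ∈ D, φ p < m + 1 / ((n : ℝ) + 1) := by
    intro n
    have : m < m + 1 / ((n : ℝ) + 1) := by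
      have : (0 : ℝ) < 1 / ((n : ℝ) + 1) := by positivity
      linarith
    obtain ⟨_, ⟨p, hp, rfl⟩, h⟩ := exists_lt_of_csInf_lt (hDn.image φ) this
    exact ⟨p, hp, h⟩
  choose P hPD hP using hex
  -- midpoint inequality
  have hmid : ∀ p ∈ D, ∀ q ∈ D, g / 4 * ‖p.1 - q.1‖ ^ 2 ≤ (φ p - m) + (φ q - m) := by
    intro p hp q hq
    have h1 := hml _ (hDc hp hq (by norm_num : (0 : ℝ) ≤ 1 / 2) (by norm_num : (0 : ℝ) ≤ 1 / 2)
      (by norm_num))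
    have e1 : ‖(1 / 2 : ℝ) • p.1 + (1 / 2 : ℝ) • q.1‖ ^ 2
        = 1 / 2 * ‖p.1‖ ^ 2 + 1 / 2 * ‖q.1‖ ^ 2 - 1 / 4 * ‖p.1 - q.1‖ ^ 2 := by
      rw [@norm_add_sq_real, @norm_sub_sq_real, norm_smul, norm_smul, inner_smul_left,
        inner_smul_right]
      norm_num
      ring
    simp only [hφ, Prod.fst_add, Prod.snd_add, Prod.smul_fst, Prod.smul_snd, e1, inner_add_right,
      inner_smul_right, smul_eq_mul] at h1 ⊢
    linarith
  have hcs : CauchySeq (fun n => (P n).1) := by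
    rw [Metric.cauchySeq_iff]
    intro δ hδ
    have hpos : 0 < g / 8 * δ ^ 2 := by positivity
    obtain ⟨N, hN⟩ := exists_nat_one_div_lt hpos
    have hb : ∀ n ≥ N, φ (P n) - m < g / 8 * δ ^ 2 := by
      intro n hn
      have h2 : 1 / ((n : ℝ) + 1) ≤ 1 / ((N : ℝ) + 1) := Nat.one_div_le_one_div hn
      linarith [hP n]
    refine ⟨N, fun a ha b hb' => ?_⟩
    rw [dist_eq_norm]
    have := hmid _ (hPD a) _ (hPD b)
    have h3 : g / 4 * ‖(P a).1 - (P b).1‖ ^ 2 < g / 4 * δ ^ 2 := by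
      linarith [hb a ha, hb b hb']
    have h4 : ‖(P a).1 - (P b).1‖ ^ 2 < δ ^ 2 := lt_of_mul_lt_mul_left h3 (by positivity)
    exact lt_of_pow_lt_pow_left₀ 2 hδ.le h4
  obtain ⟨s, hs⟩ := cauchySeq_tendsto_of_complete hcs
  have hφlim : Tendsto (fun n => φ (P n)) atTop (nhds m) := by
    refine tendsto_of_tendsto_of_tendsto_of_le_of_le tendsto_const_nhds
      (h := fun n : ℕ => m + 1 / ((n : ℝ) + 1)) ?_ (fun n => hml _ (hPD n)) (fun n => (hP n).le)
    simpa using tendsto_const_nhds.add (tendsto_one_div_add_atTop_nhds_zero_nat (𝕜 := ℝ))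
  set t := m + ⟪l, s⟫ - g / 2 * ‖s‖ ^ 2 with ht
  have htlim : Tendsto (fun n => (P n).2) atTop (nhds t) := by
    have h1 : Tendsto (fun n => φ (P n) + ⟪l, (P n).1⟫ - g / 2 * ‖(P n).1‖ ^ 2) atTop (nhds t) :=
      (hφlim.add (tendsto_const_nhds.inner hs)).sub ((hs.norm.pow 2).const_mul _)
    refine h1.congr (fun n => ?_)
    simp only [hφ]; ring
  have hqD : (s, t) ∈ D := hD.mem_of_tendsto (hs.prodMk_nhds htlim)
    (Eventually.of_forall hPD)
  have hqm : φ (s, t) = m := by simp only [hφ, ht]; ring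
  refine ⟨(s, t), hqD, fun p hp => ?_⟩
  have key : ∀ θ : ℝ, 0 < θ → θ ≤ 1 →
      0 ≤ ((p.2 - t) - ⟪l - g • s, p.1 - s⟫) + θ * (g / 2 * ‖p.1 - s‖ ^ 2) := by
    intro θ h0 h1
    have h2 := hml _ (hDc hqD hp (by linarith : 0 ≤ 1 - θ) h0.le (by ring))
    rw [← hqm] at h2
    have e0 : (1 - θ) • s + θ • p.1 = s + θ • (p.1 - s) := by module
    simp only [hφ, Prod.fst_add, Prod.snd_add, Prod.smul_fst, Prod.smul_snd, e0,
      smul_eq_mul, norm_add_sq_real, inner_add_right, inner_smul_right, norm_smul,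
      Real.norm_eq_abs, mul_pow, sq_abs] at h2
    rw [inner_sub_left, real_inner_smul_left]
    have h3 : 0 ≤ θ * (((p.2 - t) - (⟪l, p.1 - s⟫ - g * ⟪s, p.1 - s⟫))
        + θ * (g / 2 * ‖p.1 - s‖ ^ 2)) := by linarith
    exact nonneg_of_mul_nonneg_right h3 h0
  have hl : Tendsto (fun n : ℕ => ((p.2 - t) - ⟪l - g • s, p.1 - s⟫)
      + (1 / ((n : ℝ) + 1)) * (g / 2 * ‖p.1 - s‖ ^ 2)) atTop
      (nhds (((p.2 - t) - ⟪l - g • s, p.1 - s⟫) + 0 * (g / 2 * ‖p.1 - s‖ ^ 2))) :=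
    tendsto_const_nhds.add ((tendsto_one_div_add_atTop_nhds_zero_nat (𝕜 := ℝ)).mul_const _)
  have h5 := ge_of_tendsto' hl (fun n : ℕ => key _ (by positivity) (by
    rw [div_le_one (by positivity)]; linarith [(Nat.cast_nonneg n : (0 : ℝ) ≤ n)]))
  rw [inner_sub_right] at h5
  simp only
  linarith

/-- Lyapunov estimates for the exact points. -/
lemma core {Y : Type*} [NormedAddCommGroup Y] [InnerProductSpace ℝ Y]
    (D : Set (Y × ℝ)) (γ ε : ℕ → ℝ) (hγ : ∀ k, 0 < γ k)
    (lam sh μ : ℕ → Y) (th : ℕ → ℝ) (sbar : Y) (v : ℝ)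
    (hmem : ∀ n, (sh n, th n) ∈ D) (hv : (sbar, v) ∈ D)
    (hmin : ∀ p ∈ D, 0 ≤ ⟪sbar, p.1 - sbar⟫)
    (hfo : ∀ n, ∀ p ∈ D, th n - ⟪μ n, sh n⟫ ≤ p.2 - ⟪μ n, p.1⟫)
    (hμ : ∀ n, μ n = lam n - γ n • sh n)
    (hclose : ∀ n, ‖lam (n+1) - μ n‖ ≤ ε (n+1))
    (S1 : Summable fun n => ε (n+1) ^ 2 / γ (n+1))
    (A3 : Summable fun k : ℕ => (ε (k+1) / γ (k+1)) ^ 2 * ∑ i ∈ Finset.range (k+1), γ i) :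
    (∀ n, ‖sh n - sbar‖ ^ 2 ≤ ‖sh n‖ ^ 2 - ‖sbar‖ ^ 2) ∧
    (Summable fun n => γ n * (‖sh n‖ ^ 2 - ‖sbar‖ ^ 2)) ∧
    ∃ B, ∀ n, (∑ i ∈ Finset.range (n+1), γ i) * (‖sh n‖ ^ 2 - ‖sbar‖ ^ 2) ≤ B := by
  have hΦ : ∀ n, ‖sh n - sbar‖ ^ 2 ≤ ‖sh n‖ ^ 2 - ‖sbar‖ ^ 2 := by
    intro n
    have h := hmin _ (hmem n)
    simp only [inner_sub_right, real_inner_self_eq_norm_sq] at h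
    rw [@norm_sub_sq_real, real_inner_comm]
    linarith
  set Φ : ℕ → ℝ := fun n => ‖sh n‖ ^ 2 - ‖sbar‖ ^ 2 with hΦd
  have hΦ0 : ∀ n, 0 ≤ Φ n := fun n => (sq_nonneg _).trans (hΦ n)
  set H : ℕ → ℝ := fun n => ⟪μ n, sh n - sbar⟫ - th n + v with hH
  have hH0 : ∀ n, 0 ≤ H n := by
    intro n
    have := hfo n _ hv
    simp only [hH, inner_sub_right] at this ⊢
    linarith
  have hdiff : ∀ n, ∃ e : Y, ‖e‖ ≤ ε (n+1) ∧ μ n - μ (n+1) = γ (n+1) • sh (n+1) - e := by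
    intro n
    refine ⟨lam (n+1) - μ n, hclose n, ?_⟩
    rw [hμ (n+1)]; abel
  have hdesc : ∀ n, H (n+1) + γ (n+1) * (Φ (n+1) / 2) ≤ H n + ε (n+1) ^ 2 / γ (n+1) / 2 := by
    intro n
    obtain ⟨e, he, hd⟩ := hdiff n
    have h1 := hfo n _ (hmem (n+1))
    have h2 : H (n+1) + ⟪μ n - μ (n+1), sh (n+1) - sbar⟫ ≤ H n := by
      simp only [hH, inner_sub_right, inner_sub_left] at h1 ⊢
      linarith
    rw [hd, inner_sub_left, real_inner_smul_left] at h2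
    have h3 : ⟪sh (n+1), sh (n+1) - sbar⟫ = Φ (n+1) / 2 + ‖sh (n+1) - sbar‖ ^ 2 / 2 := by
      rw [@norm_sub_sq_real, inner_sub_right, real_inner_self_eq_norm_sq]
      simp only [hΦd]; ring
    have h4 : ⟪e, sh (n+1) - sbar⟫ ≤ ε (n+1) * ‖sh (n+1) - sbar‖ :=
      (real_inner_le_norm _ _).trans (mul_le_mul_of_nonneg_right he (norm_nonneg _))
    have hg := hγ (n+1)
    have h5 : ε (n+1) * ‖sh (n+1) - sbar‖ ≤
        γ (n+1) * (‖sh (n+1) - sbar‖ ^ 2 / 2) + ε (n+1) ^ 2 / γ (n+1) / 2 := by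
      have : 0 ≤ (γ (n+1) * ‖sh (n+1) - sbar‖ - ε (n+1)) ^ 2 / γ (n+1) / 2 := by positivity
      have e2 : (γ (n+1) * ‖sh (n+1) - sbar‖ - ε (n+1)) ^ 2 / γ (n+1) / 2
        = γ (n+1) * (‖sh (n+1) - sbar‖ ^ 2 / 2) + ε (n+1) ^ 2 / γ (n+1) / 2
          - ε (n+1) * ‖sh (n+1) - sbar‖ := by
        field_simp; ring
      linarith
    rw [h3] at h2
    linarith
  have hmono : ∀ n, Φ (n+1) ≤ Φ n + (ε (n+1) / γ (n+1)) ^ 2 := by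
    intro n
    obtain ⟨e, he, hd⟩ := hdiff n
    have h1 := hfo n _ (hmem (n+1))
    have h2 := hfo (n+1) _ (hmem n)
    have hg := hγ (n+1)
    have h3 : ⟪μ n - μ (n+1), sh (n+1) - sh n⟫ ≤ 0 := by
      simp only [inner_sub_right, inner_sub_left] at h1 h2 ⊢
      linarith
    rw [hd, inner_sub_left, real_inner_smul_left] at h3
    have h4 : ⟪e, sh (n+1) - sh n⟫ ≤ ε (n+1) * ‖sh (n+1) - sh n‖ :=
      (real_inner_le_norm _ _).trans (mul_le_mul_of_nonneg_right he (norm_nonneg _))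
    have h5 : ⟪sh (n+1), sh (n+1) - sh n⟫ = (Φ (n+1) - Φ n) / 2 + ‖sh (n+1) - sh n‖ ^ 2 / 2 := by
      rw [@norm_sub_sq_real, inner_sub_right, real_inner_self_eq_norm_sq]
      simp only [hΦd]; ring
    have h6 : ⟪sh (n+1), sh (n+1) - sh n⟫ ≤ (ε (n+1) / γ (n+1)) * ‖sh (n+1) - sh n‖ := by
      rw [div_mul_eq_mul_div, le_div_iff₀ hg]; linarith
    rw [h5] at h6
    nlinarith [sq_nonneg (ε (n+1) / γ (n+1) - ‖sh (n+1) - sh n‖)]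
  have hsum1 : Summable fun n => γ (n+1) * Φ (n+1) := by
    refine summable_of_sum_range_le (c := 2 * H 0 + ∑' n, ε (n+1) ^ 2 / γ (n+1))
      (fun n => mul_nonneg (hγ _).le (hΦ0 _)) (fun n => ?_)
    have h1 : ∀ n, ∑ i ∈ Finset.range n, γ (i+1) * Φ (i+1) + 2 * H n
        ≤ 2 * H 0 + ∑ i ∈ Finset.range n, ε (i+1) ^ 2 / γ (i+1) := by
      intro n
      induction n with
      | zero => simp
      | succ k ih => rw [Finset.sum_range_succ, Finset.sum_range_succ]; linarith [hdesc k]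
    have h2 := S1.sum_le_tsum (Finset.range n)
      (fun i _ => div_nonneg (sq_nonneg _) (hγ _).le)
    linarith [h1 n, hH0 n]
  have hsum : Summable fun n => γ n * Φ n := (summable_nat_add_iff 1).1 hsum1
  refine ⟨hΦ, hsum, γ 0 * Φ 0 +
    (∑' k : ℕ, (ε (k+1) / γ (k+1)) ^ 2 * ∑ i ∈ Finset.range (k+1), γ i)
      + ∑' n, γ (n+1) * Φ (n+1), fun n => ?_⟩
  have hG0 : ∀ n, 0 ≤ ∑ i ∈ Finset.range n, γ i := fun n => Finset.sum_nonneg fun i _ => (hγ i).le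
  have h1 : ∀ n, (∑ i ∈ Finset.range (n+1), γ i) * Φ n ≤ γ 0 * Φ 0 +
      (∑ k ∈ Finset.range n, (ε (k+1) / γ (k+1)) ^ 2 * ∑ i ∈ Finset.range (k+1), γ i)
      + ∑ k ∈ Finset.range n, γ (k+1) * Φ (k+1) := by
    intro n
    induction n with
    | zero => simp
    | succ k ih =>
      have := mul_le_mul_of_nonneg_left (hmono k) (hG0 (k+1))
      rw [Finset.sum_range_succ γ (k+1),
        Finset.sum_range_succ (fun k => (ε (k+1) / γ (k+1)) ^ 2 * ∑ i ∈ Finset.range (k+1), γ i) k,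
        Finset.sum_range_succ (fun k => γ (k+1) * Φ (k+1)) k]
      linarith
  have h2 := A3.sum_le_tsum (Finset.range n) (fun i _ => mul_nonneg (sq_nonneg _) (hG0 _))
  have h3 := hsum1.sum_le_tsum (Finset.range n) (fun i _ => mul_nonneg (hγ _).le (hΦ0 _))
  linarith [h1 n]

/-- Weighted sums of a weighted square-summable sequence are `o(√Γ)`. -/
lemma weighted_little_o (γ b : ℕ → ℝ) (hγ : ∀ k, 0 < γ k)
    (hS : Summable fun n => γ n * b n ^ 2)
    (A5 : Tendsto (fun n : ℕ => ∑ i ∈ Finset.range n, γ i) atTop atTop) (c : ℝ) :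
    ∀ δ > 0, ∀ᶠ n in atTop,
      c + ∑ i ∈ Finset.range n, γ i * b i ≤ δ * Real.sqrt (∑ i ∈ Finset.range n, γ i) := by
  intro δ hδ
  have htail := tendsto_sum_nat_add (fun n => γ n * b n ^ 2)
  have hd : (0 : ℝ) < (δ / 2) ^ 2 := by positivity
  obtain ⟨N, hN⟩ := (htail.eventually (gt_mem_nhds hd)).exists
  have hlim : Tendsto (fun n => δ / 2 * Real.sqrt (∑ i ∈ Finset.range n, γ i)) atTop atTop :=
    (Real.tendsto_sqrt_atTop.comp A5).const_mul_atTop (by positivity)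
  filter_upwards [hlim.eventually_ge_atTop (c + ∑ i ∈ Finset.range N, γ i * b i),
    eventually_ge_atTop N] with n h1 h2
  obtain ⟨m, rfl⟩ := Nat.exists_eq_add_of_le h2
  rw [Finset.sum_range_add (fun i => γ i * b i)]
  set G := ∑ i ∈ Finset.range (N + m), γ i with hG
  have hG0 : 0 ≤ G := Finset.sum_nonneg fun i _ => (hγ i).le
  have hcs := Finset.sum_mul_sq_le_sq_mul_sq (Finset.range m)
    (fun i => Real.sqrt (γ (N + i))) (fun i => Real.sqrt (γ (N + i)) * b (N + i))
  have e1 : ∀ i, Real.sqrt (γ (N + i)) * (Real.sqrt (γ (N + i)) * b (N + i))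
      = γ (N + i) * b (N + i) := by
    intro i; rw [← mul_assoc, Real.mul_self_sqrt (hγ _).le]
  have e2 : ∀ i, Real.sqrt (γ (N + i)) ^ 2 = γ (N + i) := fun i => Real.sq_sqrt (hγ _).le
  simp only [e1, e2, mul_pow] at hcs
  have h3 : ∑ i ∈ Finset.range m, γ (N + i) ≤ G := by
    rw [hG, Finset.sum_range_add]
    linarith [Finset.sum_nonneg fun i (_ : i ∈ Finset.range N) => (hγ i).le]
  have h4 : ∑ i ∈ Finset.range m, γ (N + i) * b (N + i) ^ 2 ≤ (δ / 2) ^ 2 := by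
    have hs := ((summable_nat_add_iff N).2 hS).sum_le_tsum (Finset.range m)
      (fun i _ => mul_nonneg (hγ _).le (sq_nonneg _))
    have : ∀ i, γ (N + i) * b (N + i) ^ 2 = γ (i + N) * b (i + N) ^ 2 := by
      intro i; rw [add_comm]
    simp only [this]
    exact hs.trans hN.le
  have h5 : (∑ i ∈ Finset.range m, γ (N + i) * b (N + i)) ^ 2 ≤ (δ / 2 * Real.sqrt G) ^ 2 := by
    rw [mul_pow, Real.sq_sqrt hG0, mul_comm]
    refine hcs.trans (mul_le_mul h3 h4 ?_ hG0)
    exact Finset.sum_nonneg fun i _ => mul_nonneg (hγ _).le (sq_nonneg _)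
  have h6 := abs_le_of_sq_le_sq' h5 (by positivity)
  linarith [h6.2]

/-- The real-valued heart of the argument. -/
lemma main_real {Y : Type*} [NormedAddCommGroup Y] [InnerProductSpace ℝ Y] [CompleteSpace Y]
    (D : Set (Y × ℝ)) (hDcl : IsClosed D) (hDc : Convex ℝ D)
    (γ ε : ℕ → ℝ) (hγ : ∀ k, 0 < γ k) (hε : ∀ k, 0 ≤ ε k)
    (lam s : ℕ → Y) (fr : ℕ → ℝ) (sbar : Y) (v : ℝ)
    (hmem : ∀ n, (s n, fr n) ∈ D) (hv : (sbar, v) ∈ D)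
    (hmin : ∀ p ∈ D, 0 ≤ ⟪sbar, p.1 - sbar⟫)
    (hopt : ∀ n, ∀ p ∈ D, fr n - ⟪lam n, s n⟫ + γ n / 2 * ‖s n‖ ^ 2
      ≤ p.2 - ⟪lam n, p.1⟫ + γ n / 2 * ‖p.1‖ ^ 2 + ε (n+1) ^ 2 / (2 * γ n))
    (hlam : ∀ n, lam (n+1) = lam n - γ n • s n)
    (A1 : Summable ε)
    (A2 : (fun k : ℕ => ε (k+1) / γ k * ∑ i ∈ Finset.range (k+1), γ i)
        =O[atTop] fun k : ℕ => 1 / Real.sqrt (∑ i ∈ Finset.range (k+1), γ i))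
    (A3 : Summable fun k : ℕ => (ε (k+1) / γ (k+1)) ^ 2 * ∑ i ∈ Finset.range (k+1), γ i)
    (A4 : Summable fun k : ℕ => ε (k+1) / γ (k+1) * ∑ i ∈ Finset.range (k+1), γ i)
    (A5 : Tendsto (fun n : ℕ => ∑ i ∈ Finset.range n, γ i) atTop atTop) :
    (∀ n, ‖s n - sbar‖ ^ 2 ≤ ‖s n‖ ^ 2 - ‖sbar‖ ^ 2) ∧
    (∃ M, 0 ≤ M ∧ ∀ᶠ n in atTop,
      ‖s n‖ ^ 2 - ‖sbar‖ ^ 2 ≤ M / ∑ i ∈ Finset.range (n+1), γ i) ∧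
    ∀ δ > 0, ∀ᶠ n in atTop, fr n ≤ v + δ := by
  have hex : ∀ n, ∃ q ∈ D, ∀ p ∈ D,
      q.2 - ⟪lam n - γ n • q.1, q.1⟫ ≤ p.2 - ⟪lam n - γ n • q.1, p.1⟫ := by
    intro n
    refine exists_exact D hDcl hDc ⟨_, hv⟩ (lam n) (γ n) (hγ n)
      (fr n - ⟪lam n, s n⟫ + γ n / 2 * ‖s n‖ ^ 2 - ε (n+1) ^ 2 / (2 * γ n)) (fun p hp => ?_)
    linarith [hopt n p hp]
  choose q hqD hq using hex
  have hr : ∀ n, γ n * ‖s n - (q n).1‖ ≤ ε (n+1) := by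
    intro n
    have h1 := hopt n _ (hqD n)
    have h2 := hq n _ (hmem n)
    have hg := hγ n
    have h3 : γ n / 2 * ‖s n - (q n).1‖ ^ 2 ≤ ε (n+1) ^ 2 / (2 * γ n) := by
      rw [@norm_sub_sq_real, real_inner_comm]
      simp only [inner_sub_left, real_inner_smul_left, real_inner_self_eq_norm_sq] at h2
      linarith
    have h4 : (γ n * ‖s n - (q n).1‖) ^ 2 ≤ ε (n+1) ^ 2 := by
      rw [le_div_iff₀ (by positivity)] at h3
      linarith
    exact (abs_le_of_sq_le_sq' h4 (hε _)).2
  have hr' : ∀ n, ‖s n - (q n).1‖ ≤ ε (n+1) / γ n := by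
    intro n
    rw [le_div_iff₀ (hγ n), mul_comm]; exact hr n
  have hG0 : ∀ n, 0 ≤ ∑ i ∈ Finset.range n, γ i := fun n => Finset.sum_nonneg fun i _ => (hγ i).le
  have S1 : Summable fun n => ε (n+1) ^ 2 / γ (n+1) := by
    refine Summable.of_nonneg_of_le (fun n => div_nonneg (sq_nonneg _) (hγ _).le) (fun n => ?_)
      (A4.mul_left ((∑' k, ε k) / γ 0))
    have h1 : ε (n+1) ≤ ∑' k, ε k := A1.le_tsum (n+1) (fun j _ => hε j)
    have h2 : γ 0 ≤ ∑ i ∈ Finset.range (n+1), γ i :=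
      Finset.single_le_sum (f := γ) (fun i _ => (hγ i).le) (by simp)
    have h3 : 0 ≤ ε (n+1) / γ (n+1) := div_nonneg (hε _) (hγ _).le
    have hg := hγ 0
    calc ε (n+1) ^ 2 / γ (n+1) = ε (n+1) * (ε (n+1) / γ (n+1)) := by ring
      _ ≤ (∑' k, ε k) * (ε (n+1) / γ (n+1)) := mul_le_mul_of_nonneg_right h1 h3
      _ = ((∑' k, ε k) / γ 0) * (ε (n+1) / γ (n+1) * γ 0) := by field_simp
      _ ≤ _ := by
        refine mul_le_mul_of_nonneg_left (mul_le_mul_of_nonneg_left h2 h3) ?_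
        exact div_nonneg ((hε _).trans h1) hg.le
  obtain ⟨hΦ, hsum, B, hB⟩ := core D γ ε hγ lam (fun n => (q n).1)
    (fun n => lam n - γ n • (q n).1) (fun n => (q n).2) sbar v hqD hv hmin hq (fun n => rfl)
    (fun n => by
      have : lam (n+1) - (lam n - γ n • (q n).1) = - (γ n • (s n - (q n).1)) := by
        rw [hlam, smul_sub]; abel
      rw [this, norm_neg, norm_smul, Real.norm_eq_abs, abs_of_pos (hγ n)]
      exact hr n) S1 A3
  have hΦs : ∀ n, ‖s n - sbar‖ ^ 2 ≤ ‖s n‖ ^ 2 - ‖sbar‖ ^ 2 := by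
    intro n
    have h := hmin _ (hmem n)
    simp only [inner_sub_right, real_inner_self_eq_norm_sq] at h
    rw [@norm_sub_sq_real, real_inner_comm]
    linarith
  obtain ⟨M2, hM2, hA2⟩ := A2.exists_nonneg
  have hG1 : ∀ᶠ n in atTop, 1 ≤ ∑ i ∈ Finset.range (n+1), γ i :=
    ((tendsto_add_atTop_iff_nat 1).2 A5).eventually_ge_atTop 1
  have hrG : ∀ᶠ n in atTop, ε (n+1) / γ n ≤ M2 / ∑ i ∈ Finset.range (n+1), γ i := by
    filter_upwards [hA2.bound, hG1] with n h1 h2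
    set G := ∑ i ∈ Finset.range (n+1), γ i with hG
    have hs1 : 1 ≤ Real.sqrt G := Real.one_le_sqrt.2 h2
    rw [Real.norm_eq_abs, Real.norm_eq_abs, abs_of_nonneg (by positivity : 0 ≤ 1 / Real.sqrt G)] at h1
    have h3 : M2 * (1 / Real.sqrt G) ≤ M2 * 1 :=
      mul_le_mul_of_nonneg_left ((div_le_one (by linarith)).2 hs1) hM2
    rw [le_div_iff₀ (by linarith)]
    linarith [le_abs_self (ε (n+1) / γ n * G)]
  have hB0 : 0 ≤ B := (mul_nonneg (hG0 1) ((sq_nonneg _).trans (hΦ 0))).trans (hB 0)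
  have hM : ∃ M, 0 ≤ M ∧ ∀ᶠ n in atTop,
      ‖s n‖ ^ 2 - ‖sbar‖ ^ 2 ≤ M / ∑ i ∈ Finset.range (n+1), γ i := by
    refine ⟨B + M2 * (2 * (‖sbar‖ ^ 2 + B + 1) + M2), by positivity, ?_⟩
    filter_upwards [hrG, hG1] with n h1 h2
    have h3 := hB n
    have h0 := hΦ n
    set G := ∑ i ∈ Finset.range (n+1), γ i with hG
    have hGp : 0 < G := by linarith
    have hr2 : ‖s n - (q n).1‖ ≤ M2 / G := (hr' n).trans h1
    have h4 : ‖s n‖ ≤ ‖(q n).1‖ + ‖s n - (q n).1‖ := by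
      have := norm_add_le (q n).1 (s n - (q n).1)
      rwa [add_sub_cancel] at this
    set r := ‖s n - (q n).1‖ with hrd
    have hr0 : 0 ≤ r := norm_nonneg _
    set a := ‖(q n).1‖ with had
    have ha0 : 0 ≤ a := norm_nonneg _
    have h5 : a ^ 2 - ‖sbar‖ ^ 2 ≤ B / G := by rw [le_div_iff₀ hGp]; linarith
    have hBG : B / G ≤ B := div_le_self hB0 h2
    have hMG : M2 / G ≤ M2 := div_le_self hM2 h2
    have h6 : a ≤ ‖sbar‖ ^ 2 + B + 1 := by nlinarith
    have h7 : ‖s n‖ ^ 2 ≤ (a + r) ^ 2 := pow_le_pow_left₀ (norm_nonneg _) h4 2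
    have h8 : r * (2 * a + r) ≤ M2 / G * (2 * (‖sbar‖ ^ 2 + B + 1) + M2) :=
      mul_le_mul hr2 (by linarith) (by positivity) (by positivity)
    rw [add_div, mul_div_right_comm]
    nlinarith
  refine ⟨hΦs, hM, fun δ hδ => ?_⟩
  obtain ⟨M, hM0, hM⟩ := hM
  -- bound on shifted multipliers
  have hlb : ∀ n, ‖lam n + (∑ i ∈ Finset.range n, γ i) • sbar‖ ≤
      (‖lam 0‖ + ∑ i ∈ Finset.range n, ε (i+1))
        + ∑ i ∈ Finset.range n, γ i * ‖(q i).1 - sbar‖ := by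
    intro n
    induction n with
    | zero => simp
    | succ k ih =>
      rw [Finset.sum_range_succ, Finset.sum_range_succ, Finset.sum_range_succ]
      have e : lam (k+1) + (∑ i ∈ Finset.range k, γ i + γ k) • sbar
          = (lam k + (∑ i ∈ Finset.range k, γ i) • sbar) - γ k • (s k - (q k).1)
            - γ k • ((q k).1 - sbar) := by
        rw [hlam]; module
      rw [e]
      refine (norm_sub_le _ _).trans ?_
      have h1 := norm_sub_le (lam k + (∑ i ∈ Finset.range k, γ i) • sbar) (γ k • (s k - (q k).1))
      rw [norm_smul (γ k) (s k - (q k).1), Real.norm_eq_abs, abs_of_pos (hγ k)] at h1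
      rw [norm_smul, Real.norm_eq_abs, abs_of_pos (hγ k)]
      linarith [hr k]
  have hS2 : Summable fun n => γ n * ‖(q n).1 - sbar‖ ^ 2 :=
    Summable.of_nonneg_of_le (fun n => mul_nonneg (hγ _).le (sq_nonneg _))
      (fun n => mul_le_mul_of_nonneg_left (hΦ n) (hγ n).le) hsum
  have hη : 0 < δ / (2 * (Real.sqrt M + 1)) := by positivity
  have hlo := weighted_little_o γ (fun n => ‖(q n).1 - sbar‖) hγ hS2 A5
    (‖lam 0‖ + ∑' k, ε (k+1)) _ hη
  have hεs : Summable fun k => ε (k+1) := (summable_nat_add_iff 1).2 A1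
  have hε0 : Tendsto (fun n => ε (n+1) * M2 / 2) atTop (nhds 0) := by
    simpa using (hεs.tendsto_atTop_zero.mul_const M2).div_const 2
  filter_upwards [hM, hrG, hG1, hlo, hε0.eventually (gt_mem_nhds (by positivity : 0 < δ / 2))]
    with n h1 h2 h3 h4 h5
  have h6 := hopt n _ hv
  have h7 := hmin _ (hmem n)
  have h8 := hlb n
  have h9 := hεs.sum_le_tsum (Finset.range n) (fun i _ => hε _)
  have hGm : ∑ i ∈ Finset.range n, γ i ≤ ∑ i ∈ Finset.range (n+1), γ i := by
    rw [Finset.sum_range_succ]; linarith [hγ n]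
  set G := ∑ i ∈ Finset.range (n+1), γ i with hG
  set g := ∑ i ∈ Finset.range n, γ i with hg
  have hGp : 0 < G := by linarith
  simp only at h6 h7
  have h10 : ‖lam n + g • sbar‖ ≤ δ / (2 * (Real.sqrt M + 1)) * Real.sqrt G := by
    have : δ / (2 * (Real.sqrt M + 1)) * Real.sqrt g ≤ δ / (2 * (Real.sqrt M + 1)) * Real.sqrt G :=
      mul_le_mul_of_nonneg_left (Real.sqrt_le_sqrt hGm) hη.le
    linarith
  have h11 : ‖s n - sbar‖ ≤ Real.sqrt M / Real.sqrt G := by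
    rw [← Real.sqrt_div hM0]
    exact Real.le_sqrt_of_sq_le ((hΦs n).trans h1)
  have h12 : ⟪lam n, s n - sbar⟫ ≤ ‖lam n + g • sbar‖ * ‖s n - sbar‖ := by
    have := real_inner_le_norm (lam n + g • sbar) (s n - sbar)
    rw [inner_add_left, real_inner_smul_left] at this
    have := mul_nonneg (hG0 n) h7
    linarith
  have h13 : ‖lam n + g • sbar‖ * ‖s n - sbar‖ ≤ δ / 2 := by
    calc _ ≤ (δ / (2 * (Real.sqrt M + 1)) * Real.sqrt G) * (Real.sqrt M / Real.sqrt G) :=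
          mul_le_mul h10 h11 (norm_nonneg _) (by positivity)
      _ = δ / 2 * (Real.sqrt M / (Real.sqrt M + 1)) := by
          have : Real.sqrt G ≠ 0 := (Real.sqrt_pos.2 hGp).ne'
          field_simp
      _ ≤ δ / 2 * 1 := by
          refine mul_le_mul_of_nonneg_left ?_ (by positivity)
          rw [div_le_one (by positivity)]; linarith
      _ = δ / 2 := mul_one _
  have h14 : ε (n+1) ^ 2 / (2 * γ n) ≤ ε (n+1) * M2 / 2 := by
    have e : ε (n+1) ^ 2 / (2 * γ n) = ε (n+1) * (ε (n+1) / γ n) / 2 := by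
      have := (hγ n).ne'
      field_simp
    rw [e]
    have : ε (n+1) / γ n ≤ M2 := h2.trans (div_le_self hM2 h3)
    have := mul_le_mul_of_nonneg_left this (hε (n+1))
    linarith
  have h15 : 0 ≤ γ n / 2 * (‖s n‖ ^ 2 - ‖sbar‖ ^ 2) :=
    mul_nonneg (by linarith [hγ n]) ((sq_nonneg _).trans (hΦs n))
  rw [inner_sub_right] at h12
  linarith

theorem statement12
    {E Y : Type*}
    [NormedAddCommGroup E] [InnerProductSpace ℝ E] [CompleteSpace E]
    [NormedAddCommGroup Y] [InnerProductSpace ℝ Y] [CompleteSpace Y]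
    (X : Set E) (hXne : X.Nonempty) (hXcl : IsClosed X) (hXcv : Convex ℝ X)
    (K : Set Y) (hKne : K.Nonempty) (hKcl : IsClosed K) (hKcv : Convex ℝ K)
    (f : E → EReal)
    (hf_bot : ∀ x : E, f x ≠ ⊥) (hf_top : ∃ x ∈ X, f x ≠ ⊤)
    (hf_dom : ∀ x : E, x ∉ X → f x = ⊤)
    (hf_lsc : LowerSemicontinuous f)
    (hf_cvx : ∀ x y : E, ∀ a b : ℝ, 0 ≤ a → 0 ≤ b → a + b = 1 →
      f (a • x + b • y) ≤ (a : EReal) * f x + (b : EReal) * f y)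
    (C : E → Y) (CC : Set (E × Y))
    (hCC : ∀ (x : E) (sv : Y), (x, sv) ∈ CC ↔ x ∈ X ∧ ∃ yv ∈ K, sv = C x - yv)
    (hCCne : CC.Nonempty) (hCCcl : IsClosed CC) (hCCcv : Convex ℝ CC)
    (hnu_bot : ∀ sv : Y, valueFn f CC sv ≠ ⊥)
    (γ : ℕ → ℝ) (hγ : ∀ k : ℕ, 0 < γ k) (ε : ℕ → ℝ) (hε : ∀ k : ℕ, 0 ≤ ε k)
    (xs : ℕ → E) (ys : ℕ → Y) (ss : ℕ → Y) (lam : ℕ → Y)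
    (hxs : ∀ k : ℕ, xs (k+1) ∈ X) (hys : ∀ k : ℕ, ys (k+1) ∈ K)
    (hss : ∀ k : ℕ, ss (k+1) = C (xs (k+1)) - ys (k+1))
    (hopt : ∀ k : ℕ,
      f (xs (k+1)) - ((⟪lam k, ss (k+1)⟫ : ℝ) : EReal)
          + ((γ k / 2 * ‖ss (k+1)‖ ^ 2 : ℝ) : EReal)
        ≤ (⨅ (p : E × Y) (_ : p ∈ CC),
              f p.1 - ((⟪lam k, p.2⟫ : ℝ) : EReal)
                + ((γ k / 2 * ‖p.2‖ ^ 2 : ℝ) : EReal))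
          + ((ε (k+1) ^ 2 / (2 * γ k) : ℝ) : EReal))
    (hlam : ∀ k : ℕ, lam (k+1) = lam k - γ k • ss (k+1))
    (A1 : Summable ε)
    (A2 : (fun k : ℕ => ε (k+1) / γ k * ∑ i ∈ Finset.range (k+1), γ i)
        =O[atTop] fun k : ℕ => 1 / Real.sqrt (∑ i ∈ Finset.range (k+1), γ i))
    (A3 : Summable fun k : ℕ => (ε (k+1) / γ (k+1)) ^ 2 * ∑ i ∈ Finset.range (k+1), γ i)
    (A4 : Summable fun k : ℕ => ε (k+1) / γ (k+1) * ∑ i ∈ Finset.range (k+1), γ i)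
    (A5 : Tendsto (fun n : ℕ => ∑ i ∈ Finset.range n, γ i) atTop atTop)
    (sbar : Y)
    (hsbar_mem : sbar ∈ closure {sv : Y | ∃ x : E, (x, sv) ∈ CC})
    (hsbar_min : ∀ sv ∈ closure {sv : Y | ∃ x : E, (x, sv) ∈ CC}, ‖sbar‖ ≤ ‖sv‖)
    (projK : Y → Y)
    (hprojK : ∀ v : Y, projK v ∈ K ∧ ∀ w ∈ K, ‖v - projK v‖ ≤ ‖v - w‖)
    :
    ((valueFn f CC sbar ≠ ⊤ ∧
        Tendsto (fun k : ℕ => f (xs k)) atTop (nhds (valueFn f CC sbar)) ∧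
        Tendsto (fun k : ℕ => C (xs k) - ys k) atTop (nhds sbar) ∧
        Tendsto (fun k : ℕ => ‖ys k - projK (C (xs k))‖) atTop (nhds 0))
      ↔ (LowerSemicontinuousAt (valueFn f CC) sbar ∧ valueFn f CC sbar < ⊤)) ∧
    (LowerSemicontinuousAt (valueFn f CC) sbar → valueFn f CC sbar < ⊤ →
      ((fun k : ℕ => ‖C (xs k) - ys k - sbar‖) =O[atTop]
          fun k : ℕ => 1 / Real.sqrt (∑ i ∈ Finset.range k, γ i)) ∧
      ((fun k : ℕ => ‖ys k - projK (C (xs k))‖) =O[atTop]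
          fun k : ℕ => 1 / Real.sqrt (∑ i ∈ Finset.range k, γ i))) := by
  classical
  -- the (real) epigraph
  set D0 : Set (Y × ℝ) := {p | ∃ x, (x, p.1) ∈ CC ∧ f x ≤ (p.2 : EReal)} with hD0
  have hD0c : Convex ℝ D0 := by
    rintro ⟨s1, t1⟩ ⟨x1, hx1, hf1⟩ ⟨s2, t2⟩ ⟨x2, hx2, hf2⟩ a b ha hb hab
    refine ⟨a • x1 + b • x2, hCCcv hx1 hx2 ha hb hab, ?_⟩
    refine (hf_cvx x1 x2 a b ha hb hab).trans ?_
    simp only [Prod.snd_add, Prod.smul_snd, smul_eq_mul, EReal.coe_add, EReal.coe_mul]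
    exact add_le_add (mul_le_mul_of_nonneg_left hf1 (EReal.coe_nonneg.2 ha))
      (mul_le_mul_of_nonneg_left hf2 (EReal.coe_nonneg.2 hb))
  have hmemCC : ∀ k, (xs (k+1), ss (k+1)) ∈ CC := fun k =>
    (hCC _ _).2 ⟨hxs k, _, hys k, hss k⟩
  -- function values along the sequence are finite
  have hfin : ∀ k, f (xs (k+1)) ≠ ⊤ := by
    intro k htop
    obtain ⟨x0, hx0, hfx0⟩ := hf_top
    obtain ⟨y0, hy0⟩ := hKne
    have h1 : (x0, C x0 - y0) ∈ CC := (hCC _ _).2 ⟨hx0, y0, hy0, rfl⟩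
    have h2 := (hopt k).trans (add_le_add_left (iInf₂_le (x0, C x0 - y0) h1) _)
    rw [htop] at h2
    simp only at h2
    lift f x0 to ℝ using ⟨hfx0, hf_bot x0⟩ with t ht
    rw [EReal.top_sub_coe, EReal.top_add_coe, top_le_iff] at h2
    exact EReal.coe_ne_top _ (by exact_mod_cast h2)
  set fr : ℕ → ℝ := fun k => (f (xs (k+1))).toReal with hfr
  have hfrc : ∀ k, ((fr k : ℝ) : EReal) = f (xs (k+1)) := fun k =>
    EReal.coe_toReal (hfin k) (hf_bot _)
  have hmem0 : ∀ k, (ss (k+1), fr k) ∈ D0 := fun k => ⟨xs (k+1), hmemCC k, (hfrc k).ge⟩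
  have hoptR0 : ∀ k, ∀ p ∈ D0, fr k - ⟪lam k, ss (k+1)⟫ + γ k / 2 * ‖ss (k+1)‖ ^ 2
      ≤ p.2 - ⟪lam k, p.1⟫ + γ k / 2 * ‖p.1‖ ^ 2 + ε (k+1) ^ 2 / (2 * γ k) := by
    rintro k ⟨s, t⟩ ⟨x, hx, hft⟩
    have h2 := (hopt k).trans (add_le_add_left (iInf₂_le (x, s) hx) _)
    rw [← hfrc k] at h2
    simp only at h2 hft
    have h3 : f x - ((⟪lam k, s⟫ : ℝ) : EReal) + ((γ k / 2 * ‖s‖ ^ 2 : ℝ) : EReal)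
        + ((ε (k+1) ^ 2 / (2 * γ k) : ℝ) : EReal)
        ≤ (t : EReal) - ((⟪lam k, s⟫ : ℝ) : EReal) + ((γ k / 2 * ‖s‖ ^ 2 : ℝ) : EReal)
        + ((ε (k+1) ^ 2 / (2 * γ k) : ℝ) : EReal) :=
      add_le_add_left (add_le_add_left (EReal.sub_le_sub hft le_rfl) _) _
    have h4 := h2.trans h3
    exact_mod_cast h4
  have hoptR : ∀ k, ∀ p ∈ closure D0, fr k - ⟪lam k, ss (k+1)⟫ + γ k / 2 * ‖ss (k+1)‖ ^ 2
      ≤ p.2 - ⟪lam k, p.1⟫ + γ k / 2 * ‖p.1‖ ^ 2 + ε (k+1) ^ 2 / (2 * γ k) := by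
    intro k
    have hc : IsClosed {p : Y × ℝ | fr k - ⟪lam k, ss (k+1)⟫ + γ k / 2 * ‖ss (k+1)‖ ^ 2
      ≤ p.2 - ⟪lam k, p.1⟫ + γ k / 2 * ‖p.1‖ ^ 2 + ε (k+1) ^ 2 / (2 * γ k)} :=
      isClosed_le (by fun_prop) (by fun_prop)
    exact closure_minimal (hoptR0 k) hc
  -- variational inequality
  have hScv : Convex ℝ (closure {sv : Y | ∃ x : E, (x, sv) ∈ CC}) := by
    refine Convex.closure ?_
    rintro s1 ⟨x1, hx1⟩ s2 ⟨x2, hx2⟩ a b ha hb hab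
    exact ⟨a • x1 + b • x2, hCCcv hx1 hx2 ha hb hab⟩
  have hvi : ∀ w ∈ closure {sv : Y | ∃ x : E, (x, sv) ∈ CC}, 0 ≤ ⟪sbar, w - sbar⟫ := by
    have h1 : ‖(0 : Y) - sbar‖ = ⨅ w : closure {sv : Y | ∃ x : E, (x, sv) ∈ CC}, ‖(0 : Y) - w‖ := by
      have : Nonempty (closure {sv : Y | ∃ x : E, (x, sv) ∈ CC}) := ⟨⟨sbar, hsbar_mem⟩⟩
      refine le_antisymm (le_ciInf fun w => ?_) ?_
      · simpa using hsbar_min w w.2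
      · exact ciInf_le ⟨0, by rintro _ ⟨w, rfl⟩; exact norm_nonneg _⟩
          (⟨sbar, hsbar_mem⟩ : closure {sv : Y | ∃ x : E, (x, sv) ∈ CC})
    intro w hw
    have := (norm_eq_iInf_iff_real_inner_le_zero hScv hsbar_mem).1 h1 w hw
    rw [zero_sub, inner_neg_left] at this
    linarith
  have hmin : ∀ p ∈ closure D0, 0 ≤ ⟪sbar, p.1 - sbar⟫ := by
    have hc : IsClosed {p : Y × ℝ | 0 ≤ ⟪sbar, p.1 - sbar⟫} :=
      isClosed_le (by fun_prop) (by fun_prop)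
    refine closure_minimal ?_ hc
    rintro ⟨s, t⟩ ⟨x, hx, -⟩
    exact hvi s (subset_closure ⟨x, hx⟩)
  have main := fun (v : ℝ) (hv : (sbar, v) ∈ closure D0) =>
    main_real (closure D0) isClosed_closure hD0c.closure γ ε hγ hε lam (fun n => ss (n+1)) fr sbar v
      (fun n => subset_closure (hmem0 n)) hv hmin hoptR hlam A1 A2 A3 A4 A5
  -- rates
  have rates : ∀ v : ℝ, (sbar, v) ∈ closure D0 →
      ((fun k : ℕ => ‖C (xs k) - ys k - sbar‖) =O[atTop]
          fun k : ℕ => 1 / Real.sqrt (∑ i ∈ Finset.range k, γ i)) ∧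
      ((fun k : ℕ => ‖ys k - projK (C (xs k))‖) =O[atTop]
          fun k : ℕ => 1 / Real.sqrt (∑ i ∈ Finset.range k, γ i)) := by
    intro v hv
    obtain ⟨hΦ, ⟨M, hM0, hM⟩, -⟩ := main v hv
    have hM' : ∀ᶠ n in atTop, 1 ≤ n ∧ ‖ss n‖ ^ 2 - ‖sbar‖ ^ 2 ≤ M / ∑ i ∈ Finset.range n, γ i := by
      obtain ⟨N, hN⟩ := eventually_atTop.1 hM
      filter_upwards [eventually_ge_atTop (N+1)] with n hn
      obtain ⟨m, rfl⟩ := Nat.exists_eq_add_of_le' (show 1 ≤ n by omega)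
      exact ⟨by omega, hN m (by omega)⟩
    have hfrom : ∀ (n : ℕ) (a : ℝ), 0 ≤ a → a ^ 2 ≤ M / ∑ i ∈ Finset.range n, γ i →
        ‖a‖ ≤ Real.sqrt M * ‖1 / Real.sqrt (∑ i ∈ Finset.range n, γ i)‖ := by
      intro n a ha h
      rw [Real.norm_of_nonneg ha, Real.norm_of_nonneg (by positivity), mul_one_div,
        ← Real.sqrt_div hM0]
      exact Real.le_sqrt_of_sq_le h
    constructor
    · refine IsBigO.of_bound (Real.sqrt M) ?_
      filter_upwards [hM'] with n hn
      obtain ⟨hn1, hn⟩ := hn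
      refine hfrom n _ (norm_nonneg _) ?_
      obtain ⟨m, rfl⟩ := Nat.exists_eq_add_of_le' hn1
      rw [← hss m]
      exact (hΦ m).trans hn
    · refine IsBigO.of_bound (Real.sqrt M) ?_
      filter_upwards [hM'] with n hn
      obtain ⟨hn1, hn⟩ := hn
      refine hfrom n _ (norm_nonneg _) (le_trans ?_ hn)
      obtain ⟨m, rfl⟩ := Nat.exists_eq_add_of_le' hn1
      obtain ⟨hpK, hpm⟩ := hprojK (C (xs (m+1)))
      have h1 : ‖C (xs (m+1)) - projK (C (xs (m+1)))‖ = ⨅ w : K, ‖C (xs (m+1)) - w‖ := by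
        have : Nonempty K := ⟨⟨_, hpK⟩⟩
        refine le_antisymm (le_ciInf fun w => hpm w w.2) ?_
        exact ciInf_le ⟨0, by rintro _ ⟨w, rfl⟩; exact norm_nonneg _⟩
          (⟨_, hpK⟩ : K)
      have h2 := (norm_eq_iInf_iff_real_inner_le_zero hKcv hpK).1 h1 _ (hys m)
      have h3 : ‖sbar‖ ≤ ‖C (xs (m+1)) - projK (C (xs (m+1)))‖ :=
        hsbar_min _ (subset_closure ⟨xs (m+1), (hCC _ _).2 ⟨hxs m, _, hpK, rfl⟩⟩)
      have h4 : ss (m+1) = (C (xs (m+1)) - projK (C (xs (m+1))))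
          - (ys (m+1) - projK (C (xs (m+1)))) := by rw [hss]; abel
      have h5 := pow_le_pow_left₀ (norm_nonneg _) h3 2
      have h6 := @norm_sub_sq_real Y _ _ (C (xs (m+1)) - projK (C (xs (m+1))))
        (ys (m+1) - projK (C (xs (m+1))))
      rw [← h4] at h6
      linarith
  have hsqrt0 : Tendsto (fun k : ℕ => 1 / Real.sqrt (∑ i ∈ Finset.range k, γ i)) atTop (nhds 0) := by
    simp only [one_div]
    exact (Real.tendsto_sqrt_atTop.comp A5).inv_tendsto_atTop
  have habove : ∀ z : ℝ, valueFn f CC sbar < (z : EReal) → (sbar, z) ∈ closure D0 := by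
    intro z hz
    simp only [valueFn, iInf_lt_iff] at hz
    obtain ⟨x, hx, hfx⟩ := hz
    exact subset_closure ⟨x, hx, hfx.le⟩
  have hrates : valueFn f CC sbar < ⊤ →
      ((fun k : ℕ => ‖C (xs k) - ys k - sbar‖) =O[atTop]
          fun k : ℕ => 1 / Real.sqrt (∑ i ∈ Finset.range k, γ i)) ∧
      ((fun k : ℕ => ‖ys k - projK (C (xs k))‖) =O[atTop]
          fun k : ℕ => 1 / Real.sqrt (∑ i ∈ Finset.range k, γ i)) := by
    intro hlt
    obtain ⟨z, hz, -⟩ := EReal.lt_iff_exists_real_btwn.1 hlt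
    exact rates z (habove z hz)
  have hshift : ∀ P : ℕ → Prop, (∀ᶠ n in atTop, P (n+1)) → ∀ᶠ n in atTop, P n := by
    intro P hP
    obtain ⟨N, hN⟩ := eventually_atTop.1 hP
    filter_upwards [eventually_ge_atTop (N+1)] with n hn
    obtain ⟨m, rfl⟩ := Nat.exists_eq_add_of_le' (show 1 ≤ n by omega)
    exact hN m (by omega)
  have hlim : ∀ v : ℝ, (sbar, v) ∈ closure D0 → ∀ w : ℝ, v < w →
      ∀ᶠ n in atTop, f (xs n) ≤ (w : EReal) := by
    intro v hv w hw
    refine hshift _ ?_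
    filter_upwards [(main v hv).2.2 (w - v) (sub_pos.2 hw)] with n hn
    rw [← hfrc n]
    exact_mod_cast (by linarith : fr n ≤ w)
  refine ⟨⟨?_, ?_⟩, fun _ h => hrates h⟩
  · rintro ⟨hne, hft, -, -⟩
    refine ⟨?_, lt_top_iff_ne_top.2 hne⟩
    intro y hy
    by_contra hcon
    obtain ⟨z, hyz, hz⟩ := EReal.lt_iff_exists_real_btwn.1 hy
    obtain ⟨w, hzw, hw⟩ := EReal.lt_iff_exists_real_btwn.1 hz
    have hzD : (sbar, z) ∈ closure D0 := by
      have hfq : ∃ᶠ s in nhds sbar, (s, z) ∈ D0 := by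
        have : ∃ᶠ s in nhds sbar, ¬ y < valueFn f CC s := not_eventually.1 hcon
        refine this.mono (fun s hs => ?_)
        have h1 : valueFn f CC s < (z : EReal) := (not_lt.1 hs).trans_lt hyz
        simp only [valueFn, iInf_lt_iff] at h1
        obtain ⟨x, hx, hfx⟩ := h1
        exact ⟨x, hx, hfx.le⟩
      have ht : Tendsto (fun s : Y => (s, z)) (nhds sbar) (nhds (sbar, z)) :=
        (Continuous.prodMk_left z).tendsto sbar
      exact mem_closure_iff_frequently.2 (ht.frequently hfq)
    have h1 := hlim z hzD w (by exact_mod_cast hzw)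
    have h2 := hft.eventually (lt_mem_nhds hw)
    obtain ⟨n, hn1, hn2⟩ := (h1.and h2).exists
    exact absurd hn1 (not_le.2 hn2)
  · rintro ⟨hlsc, hlt⟩
    obtain ⟨hr1, hr2⟩ := hrates hlt
    have hs : Tendsto (fun k : ℕ => C (xs k) - ys k) atTop (nhds sbar) :=
      tendsto_iff_norm_sub_tendsto_zero.2 (hr1.trans_tendsto hsqrt0)
    refine ⟨hlt.ne, ?_, hs, hr2.trans_tendsto hsqrt0⟩
    rw [tendsto_order]
    constructor
    · intro a ha
      filter_upwards [hs.eventually (hlsc a ha), eventually_ge_atTop 1] with n hn hn1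
      obtain ⟨m, rfl⟩ := Nat.exists_eq_add_of_le' hn1
      rw [← hss m] at hn
      exact hn.trans_le (iInf₂_le (xs (m+1)) (hmemCC m))
    · intro a ha
      obtain ⟨w, hw, hwa⟩ := EReal.lt_iff_exists_real_btwn.1 ha
      obtain ⟨z, hz, hzw⟩ := EReal.lt_iff_exists_real_btwn.1 hw
      filter_upwards [hlim z (habove z hz) w (by exact_mod_cast hzw)] with n hn
      exact hn.trans_lt hwa
end
end

section
/- Suppose X and Y are finite-dimensional. Then the objective function f has no nonzero recession direction in common with the constraints (i.e. no nonzero d in the recession cone D of the constraints is a recession direction of f) if and only if f is level bounded with respect to constraint perturbations (i.e. for every s ∈ Y there is a neighborhood V_s of s such that f restricted to { x ∈ X : C(x) ∈ K + V_s } has bounded sublevel sets). -/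
open scoped RealInnerProductSpace
open Filter Asymptotics

noncomputable section

/-- Asymptotic directions of a closed convex set are recession directions. -/
theorem recession_of_seq {F : Type*} [NormedAddCommGroup F] [NormedSpace ℝ F]
    {A : Set F} (hcl : IsClosed A) (hcv : Convex ℝ A) {p : ℕ → F} {e : ℕ → ℝ} {d : F}
    (hp : ∀ n, p n ∈ A) (he : ∀ n, 0 ≤ e n) (he0 : Tendsto e atTop (nhds 0))
    (hd : Tendsto (fun n => e n • p n) atTop (nhds d)) {a : F} (ha : a ∈ A)
    {t : ℝ} (ht : 0 ≤ t) : a + t • d ∈ A := by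
  have h1 : Tendsto (fun n => (1 - t * e n) • a + (t * e n) • p n) atTop
      (nhds ((1 - t * 0) • a + t • d)) := by
    refine Tendsto.add ?_ ?_
    · exact (tendsto_const_nhds.sub (he0.const_mul t)).smul_const a
    · simpa only [mul_smul] using hd.const_smul t
  have h2 : a + t • d = (1 - t * 0) • a + t • d := by simp
  rw [h2]
  refine hcl.mem_of_tendsto h1 ?_
  have h3 : Tendsto (fun n => t * e n) atTop (nhds 0) := by
    simpa using he0.const_mul t
  filter_upwards [h3.eventually (ge_mem_nhds (show (0 : ℝ) < 1 by norm_num))] with n hn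
  exact hcv ha (hp n) (by linarith) (mul_nonneg ht (he n)) (by ring)

theorem epi_closed {E : Type*} [NormedAddCommGroup E] {f : E → EReal}
    (hf_lsc : LowerSemicontinuous f) : IsClosed {p : E × ℝ | f p.1 ≤ (p.2 : EReal)} := by
  have h := hf_lsc.isClosed_epigraph
  exact h.preimage (f := fun p : E × ℝ => (p.1, (p.2 : EReal)))
    (continuous_fst.prodMk (continuous_coe_real_ereal.comp continuous_snd))

theorem epi_convex {E : Type*} [NormedAddCommGroup E] [NormedSpace ℝ E] {f : E → EReal}
    (hf_cvx : ∀ x y : E, ∀ a b : ℝ, 0 ≤ a → 0 ≤ b → a + b = 1 →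
      f (a • x + b • y) ≤ (a : EReal) * f x + (b : EReal) * f y) :
    Convex ℝ {p : E × ℝ | f p.1 ≤ (p.2 : EReal)} := by
  rintro ⟨x, r⟩ hx ⟨y, s⟩ hy a b ha hb hab
  simp only [Set.mem_ofPred_eq] at hx hy
  change f (a • x + b • y) ≤ ((a * r + b * s : ℝ) : EReal)
  refine (hf_cvx x y a b ha hb hab).trans ?_
  rw [EReal.coe_add, EReal.coe_mul, EReal.coe_mul]
  exact add_le_add (mul_le_mul_of_nonneg_left hx (by exact_mod_cast ha))
    (mul_le_mul_of_nonneg_left hy (by exact_mod_cast hb))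

theorem statement15
    {E Y : Type*}
    [NormedAddCommGroup E] [InnerProductSpace ℝ E] [FiniteDimensional ℝ E]
    [NormedAddCommGroup Y] [InnerProductSpace ℝ Y] [FiniteDimensional ℝ Y]
    (X : Set E) (hXne : X.Nonempty) (hXcl : IsClosed X) (hXcv : Convex ℝ X)
    (K : Set Y) (hKne : K.Nonempty) (hKcl : IsClosed K) (hKcv : Convex ℝ K)
    (f : E → EReal)
    (hf_bot : ∀ x : E, f x ≠ ⊥) (hf_top : ∃ x ∈ X, f x ≠ ⊤)
    (hf_dom : ∀ x : E, x ∉ X → f x = ⊤)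
    (hf_lsc : LowerSemicontinuous f)
    (hf_cvx : ∀ x y : E, ∀ a b : ℝ, 0 ≤ a → 0 ≤ b → a + b = 1 →
      f (a • x + b • y) ≤ (a : EReal) * f x + (b : EReal) * f y)
    (C : E → Y) (CC : Set (E × Y))
    (hCC : ∀ (x : E) (sv : Y), (x, sv) ∈ CC ↔ x ∈ X ∧ ∃ yv ∈ K, sv = C x - yv)
    (hCCne : CC.Nonempty) (hCCcl : IsClosed CC) (hCCcv : Convex ℝ CC) :
    ((∀ d : E, d ≠ 0 →
          (∃ (sv : Y) (x0 : E), ∀ t : ℝ, 0 ≤ t → (x0 + t • d, sv) ∈ CC) →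
          ¬ (∀ x0 : E, f x0 ≠ ⊤ → ∀ t1 t2 : ℝ, 0 ≤ t1 → t1 ≤ t2 →
              f (x0 + t2 • d) ≤ f (x0 + t1 • d)))
      ↔ (∀ sv : Y, ∃ V ∈ nhds sv, ∀ c : ℝ,
          Bornology.IsBounded {x' : E | (∃ v ∈ V, (x', v) ∈ CC) ∧ f x' ≤ (c : EReal)})) := by
  constructor
  · intro H sv
    refine ⟨Metric.closedBall sv 1, Metric.closedBall_mem_nhds sv one_pos, fun c => ?_⟩
    by_contra hb
    have hex : ∀ n : ℕ, ∃ q : E × Y, q.2 ∈ Metric.closedBall sv 1 ∧ q ∈ CC ∧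
        f q.1 ≤ (c : EReal) ∧ (n : ℝ) + 1 ≤ ‖q.1‖ := by
      intro n
      by_contra hn
      push Not at hn
      apply hb
      refine (Metric.isBounded_closedBall (x := (0 : E)) (r := (n : ℝ) + 1)).subset ?_
      rintro x ⟨⟨v, hv, hxv⟩, hfx⟩
      rw [mem_closedBall_zero_iff]
      exact (hn (x, v) hv hxv hfx).le
    choose q hqV hqC hqf hqn using hex
    have hpos : ∀ n, 0 < ‖(q n).1‖ := fun n => by
      have := hqn n
      have h0 : (0 : ℝ) ≤ n := Nat.cast_nonneg n
      linarith
    have hsph : ∀ n, ‖(q n).1‖⁻¹ • (q n).1 ∈ Metric.sphere (0 : E) 1 := by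
      intro n
      rw [mem_sphere_zero_iff_norm, norm_smul, norm_inv, norm_norm,
        inv_mul_cancel₀ (hpos n).ne']
    obtain ⟨d, hd, φ, hφ, hlim⟩ := (isCompact_sphere (0 : E) 1).tendsto_subseq hsph
    have hnt : Tendsto (fun n => ‖(q n).1‖) atTop atTop :=
      tendsto_atTop_mono (fun n => (by have := hqn n; linarith : (n : ℝ) ≤ ‖(q n).1‖))
        tendsto_natCast_atTop_atTop
    have he0 : Tendsto (fun n => ‖(q (φ n)).1‖⁻¹) atTop (nhds 0) :=
      (tendsto_inv_atTop_zero.comp hnt).comp hφ.tendsto_atTop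
    have he : ∀ n, 0 ≤ ‖(q (φ n)).1‖⁻¹ := fun n => by positivity
    have hd0 : d ≠ 0 := by
      rintro rfl
      simp at hd
    have hlim1 : Tendsto (fun n => ‖(q (φ n)).1‖⁻¹ • (q (φ n)).1) atTop (nhds d) := hlim
    have hlim2 : Tendsto (fun n => ‖(q (φ n)).1‖⁻¹ • (q (φ n)).2) atTop (nhds 0) := by
      refine squeeze_zero_norm (a := fun n => ‖(q (φ n)).1‖⁻¹ * (‖sv‖ + 1)) (fun n => ?_) ?_
      · rw [norm_smul, norm_inv, norm_norm]
        refine mul_le_mul_of_nonneg_left ?_ (he n)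
        have h1 := hqV (φ n)
        rw [mem_closedBall_iff_norm] at h1
        have h2 := norm_le_norm_add_norm_sub' (q (φ n)).2 sv
        linarith
      · simpa using he0.mul_const (‖sv‖ + 1)
    refine H d hd0 ?_ ?_
    · refine ⟨(q 0).2, (q 0).1, fun t ht => ?_⟩
      have := recession_of_seq hCCcl hCCcv (p := fun n => q (φ n)) (d := (d, 0))
        (fun n => hqC _) he he0 (hlim1.prodMk_nhds hlim2) (hqC 0) ht
      have h5 : q 0 + t • ((d, 0) : E × Y) = ((q 0).1 + t • d, (q 0).2) := by
        ext <;> simp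
      rwa [h5] at this
    · intro x0 _ t1 t2 _ h12
      by_cases htop : f (x0 + t1 • d) = ⊤
      · rw [htop]; exact le_top
      obtain ⟨r, hr⟩ : ∃ r : ℝ, f (x0 + t1 • d) = (r : EReal) :=
        ⟨_, (EReal.coe_toReal htop (hf_bot _)).symm⟩
      have hl3 : Tendsto (fun n => ‖(q (φ n)).1‖⁻¹ • c) atTop (nhds 0) := by
        simpa using he0.mul_const c
      have := recession_of_seq (epi_closed hf_lsc) (epi_convex hf_cvx)
        (p := fun n => ((q (φ n)).1, c)) (d := (d, 0))
        (fun n => hqf _) he he0 (hlim1.prodMk_nhds hl3)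
        (a := (x0 + t1 • d, r)) hr.le (sub_nonneg.2 h12)
      have h4 : x0 + t1 • d + (t2 - t1) • d = x0 + t2 • d := by
        rw [sub_smul]; abel
      rw [hr, ← h4]
      simpa using this
  · rintro H d hd0 ⟨sv, x0, hx0⟩ hrec
    obtain ⟨x1, hx1, hf1⟩ := hf_top
    obtain ⟨k, hk⟩ := hKne
    have hmem : (x1, C x1 - k) ∈ CC := (hCC _ _).2 ⟨hx1, k, hk, rfl⟩
    have he0 : Tendsto (fun n : ℕ => ((n : ℝ) + 1)⁻¹) atTop (nhds 0) := by
      simpa using tendsto_one_div_add_atTop_nhds_zero_nat (𝕜 := ℝ)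
    have hlim : Tendsto (fun n : ℕ => ((n : ℝ) + 1)⁻¹ • ((x0 + ((n : ℝ) + 1) • d, sv) : E × Y))
        atTop (nhds (d, 0)) := by
      refine Tendsto.prodMk_nhds
        (mx := fun n : ℕ => ((n : ℝ) + 1)⁻¹ • (x0 + ((n : ℝ) + 1) • d))
        (my := fun n : ℕ => ((n : ℝ) + 1)⁻¹ • sv) ?_ ?_
      · have h : Tendsto (fun n : ℕ => ((n : ℝ) + 1)⁻¹ • x0 + d) atTop (nhds ((0 : ℝ) • x0 + d)) :=
          (he0.smul_const x0).add_const d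
        rw [zero_smul, zero_add] at h
        refine h.congr fun n => ?_
        rw [smul_add, smul_smul, inv_mul_cancel₀ (by positivity), one_smul]
      · simpa using he0.smul_const sv
    obtain ⟨V, hV, hb⟩ := H (C x1 - k)
    obtain ⟨r, hr⟩ : ∃ r : ℝ, f x1 = (r : EReal) :=
      ⟨_, (EReal.coe_toReal hf1 (hf_bot _)).symm⟩
    obtain ⟨R, hR⟩ := (hb r).exists_norm_le
    have hall : ∀ t : ℝ, 0 ≤ t → ‖x1 + t • d‖ ≤ R := by
      intro t ht
      refine hR _ ⟨⟨_, mem_of_mem_nhds hV, ?_⟩, ?_⟩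
      · have := recession_of_seq hCCcl hCCcv (fun n : ℕ => hx0 ((n : ℝ) + 1) (by positivity))
          (fun n => by positivity) he0 hlim hmem ht
        simpa using this
      · have := hrec x1 hf1 0 t le_rfl ht
        rwa [zero_smul, add_zero, hr] at this
    have hdp : 0 < ‖d‖ := norm_pos_iff.2 hd0
    have hR0 : 0 ≤ R := (norm_nonneg _).trans (hall 0 le_rfl)
    have ht : 0 ≤ (R + ‖x1‖ + 1) / ‖d‖ := by positivity
    have h1 := hall _ ht
    have h2 : ‖((R + ‖x1‖ + 1) / ‖d‖) • d‖ = R + ‖x1‖ + 1 := by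
      rw [norm_smul, Real.norm_of_nonneg ht, div_mul_cancel₀ _ hdp.ne']
    have h3 := norm_sub_le (x1 + ((R + ‖x1‖ + 1) / ‖d‖) • d) x1
    rw [add_sub_cancel_left, h2] at h3
    linarith
end
end
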